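/- arXiv:2206.01928 — 2 statements merged into one kernel-verified Lean document; each statement's English description precedes it below -/
import Mathlib

section
/- Assume conditions A1–A3 hold. For any p ≥ 2 there exists C_p > 0 such that for all T ≥ 1 and sufficiently small ε > 0, E[ sup_{t∈[0,T]} |Y^ε_t|^p ] ≤ C_p (1 + E|ζ|^p) T ε^{-1}. -/
open MeasureTheory Filter
open scoped ENNReal NNReal Topology RealInnerProductSpace

set_option maxSynthPendingDepth 3

noncomputable section

namespace DiffApprox

/-- Euclidean space `ℝ^k`. -/
abbrev Vec (k : ℕ) : Type := EuclideanSpace ℝ (Fin k)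

/-- `k × l` real matrices, viewed as continuous linear maps `ℝ^l → ℝ^k`. -/
abbrev Mat (k l : ℕ) : Type := Vec l →L[ℝ] Vec k

/-- `μ` belongs to the 2-Wasserstein space `𝒫₂(ℝ^k)`. -/
def memP2 {k : ℕ} (μ : Measure (Vec k)) : Prop :=
  IsProbabilityMeasure μ ∧ (∫⁻ x, (‖x‖₊ : ℝ≥0∞) ^ (2 : ℕ) ∂μ) < ⊤

/-- `π` is a coupling of `μ` and `ν`. -/
def IsCoupling {k : ℕ} (π : Measure (Vec k × Vec k)) (μ ν : Measure (Vec k)) : Prop :=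
  π.map Prod.fst = μ ∧ π.map Prod.snd = ν

/-- The 2-Wasserstein distance. -/
def W2 {k : ℕ} (μ ν : Measure (Vec k)) : ℝ :=
  sInf {c : ℝ | ∃ π : Measure (Vec k × Vec k), IsCoupling π μ ν ∧
    c = Real.sqrt (∫ p, ‖p.1 - p.2‖ ^ (2 : ℕ) ∂π)}

/-- Trace of an endomorphism of `ℝ^k`. -/
def trCLM {k : ℕ} (A : Vec k →L[ℝ] Vec k) : ℝ :=
  LinearMap.trace ℝ (Vec k) A.toLinearMap

/-- Hilbert space adjoint (matrix transpose). -/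
def adj {k l : ℕ} (A : Mat k l) : Mat l k := ContinuousLinearMap.adjoint A

/-- The outer product `(a ⊗ b) v = ⟪b, v⟫ • a`, i.e. `(a ⊗ b)_{ij} = aᵢ bⱼ`. -/
def outer {k : ℕ} (a b : Vec k) : Mat k k := (innerSL ℝ b).smulRight a

/-- Hessian of a scalar function. -/
def hess {k : ℕ} (φ : Vec k → ℝ) (y : Vec k) : Vec k →L[ℝ] Vec k :=
  fderiv ℝ (gradient φ) y

/-- Mixed second derivative `∂²_{xy} φ`. -/
def hessMixed {k l : ℕ} (φ : Vec k → Vec l → ℝ) (x : Vec k) (y : Vec l) :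
    Vec k →L[ℝ] Vec l :=
  fderiv ℝ (fun x' => gradient (φ x') y) x

/-- `C²` test function with compact support. -/
def TestFun {k : ℕ} (φ : Vec k → ℝ) : Prop :=
  ContDiff ℝ 2 φ ∧ HasCompactSupport φ

/-- `C²` test function of two variables with compact support. -/
def TestFun2 {k l : ℕ} (φ : Vec k → Vec l → ℝ) : Prop :=
  ContDiff ℝ 2 (Function.uncurry φ) ∧ HasCompactSupport (Function.uncurry φ)

/-- Generator `L₂(x,μ)` of the frozen equation `dY = f(x,μ,Y)dt + g(x,μ,Y)dW`. -/
def genFrozen {n m d : ℕ} (f : Vec n → Measure (Vec n) → Vec m → Vec m)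
    (g : Vec n → Measure (Vec n) → Vec m → Mat m d) (x : Vec n) (μ : Measure (Vec n))
    (φ : Vec m → ℝ) (y : Vec m) : ℝ :=
  ⟪f x μ y, gradient φ y⟫ +
    (1 / 2) * trCLM (((g x μ y).comp (adj (g x μ y))).comp (hess φ y))

/-- `ν` is an invariant probability measure of the frozen equation. -/
def IsInvariantMeasure {n m d : ℕ} (f : Vec n → Measure (Vec n) → Vec m → Vec m)
    (g : Vec n → Measure (Vec n) → Vec m → Mat m d) (x : Vec n) (μ : Measure (Vec n))
    (ν : Measure (Vec m)) : Prop :=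
  IsProbabilityMeasure ν ∧ ∀ φ : Vec m → ℝ, TestFun φ → ∫ y, genFrozen f g x μ φ y ∂ν = 0

/-- `M` is a martingale on `[0, ∞)` w.r.t. the filtration `ℱ`. -/
def MartOn {Ω : Type} {mΩ : MeasurableSpace Ω} (P : Measure Ω) (ℱ : Filtration ℝ mΩ)
    (M : ℝ → Ω → ℝ) : Prop :=
  (∀ t : ℝ, 0 ≤ t → StronglyMeasurable[ℱ t] (M t) ∧ Integrable (M t) P) ∧
    ∀ s t : ℝ, 0 ≤ s → s ≤ t → P[M t|ℱ s] =ᵐ[P] M s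

/-- The coefficients of the slow–fast McKean–Vlasov system. -/
structure Coeffs (n m d : ℕ) where
  b : Vec n → Measure (Vec n) → Vec m → Vec n
  K : Vec n → Measure (Vec n) → Vec m → Vec n
  σ : Vec n → Measure (Vec n) → Vec m → Mat n d
  f : Vec n → Measure (Vec n) → Vec m → Vec m
  h : Vec n → Measure (Vec n) → Vec m → Vec m
  g : Vec n → Measure (Vec n) → Vec m → Mat m d

/-- Generator of the coupled slow–fast system `(X^ε, Y^ε)` with frozen distribution `μ`. -/
def genSF {n m d : ℕ} (C : Coeffs n m d) (ε : ℝ) (μ : Measure (Vec n))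
    (φ : Vec n → Vec m → ℝ) (x : Vec n) (y : Vec m) : ℝ :=
  ⟪C.b x μ y + (Real.sqrt ε)⁻¹ • C.K x μ y, gradient (fun x' => φ x' y) x⟫ +
    ⟪ε⁻¹ • C.f x μ y + (Real.sqrt ε)⁻¹ • C.h x μ y, gradient (φ x) y⟫ +
    (1 / 2) * trCLM (((C.σ x μ y).comp (adj (C.σ x μ y))).comp (hess (fun x' => φ x' y) x)) +
    (1 / (2 * ε)) * trCLM (((C.g x μ y).comp (adj (C.g x μ y))).comp (hess (φ x) y)) +
    (Real.sqrt ε)⁻¹ * trCLM (((C.σ x μ y).comp (adj (C.g x μ y))).comp (hessMixed φ x y))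

/-- `(X, Y)` is a (weak–martingale problem) solution of the slow–fast McKean–Vlasov
system with scale parameter `ε` and initial data `(ξ, ζ)`. -/
structure IsSFSolution {n m d : ℕ} (C : Coeffs n m d) (ε : ℝ) {Ω : Type}
    [mΩ : MeasurableSpace Ω] (P : Measure Ω) (ℱ : Filtration ℝ mΩ)
    (X : ℝ → Ω → Vec n) (Y : ℝ → Ω → Vec m) (ξ : Ω → Vec n) (ζ : Ω → Vec m) : Prop where
  measX : ∀ t, Measurable (X t)
  measY : ∀ t, Measurable (Y t)
  adaptX : Adapted ℱ X
  adaptY : Adapted ℱ Y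
  initX : ∀ᵐ ω ∂P, X 0 ω = ξ ω
  initY : ∀ᵐ ω ∂P, Y 0 ω = ζ ω
  lawP2X : ∀ t, 0 ≤ t → memP2 (P.map (X t))
  contX : ∀ ω, Continuous fun t => X t ω
  contY : ∀ ω, Continuous fun t => Y t ω
  mart : ∀ φ : Vec n → Vec m → ℝ, TestFun2 φ →
    MartOn P ℱ fun t ω =>
      φ (X t ω) (Y t ω) -
        ∫ s in Set.Ioc (0 : ℝ) t, genSF C ε (P.map (X s)) φ (X s ω) (Y s ω)

/-- Generator of a distribution dependent SDE `dX = Θ(X, ℒ_X) dt + Σ(X, ℒ_X) dW`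
with `A = Σ Σ*`. -/
def genLim {n : ℕ} (Θ : Vec n → Measure (Vec n) → Vec n)
    (A : Vec n → Measure (Vec n) → Mat n n) (μ : Measure (Vec n)) (U : Vec n → ℝ)
    (x : Vec n) : ℝ :=
  ⟪Θ x μ, gradient U x⟫ + (1 / 2) * trCLM ((A x μ).comp (hess U x))

/-- `X` is a (weak) solution of the McKean–Vlasov SDE with drift `Θ`, squared diffusion
`A = Σ Σ*` and initial datum `ξ`. -/
structure IsLimitSolution {n : ℕ} (Θ : Vec n → Measure (Vec n) → Vec n)
    (A : Vec n → Measure (Vec n) → Mat n n) {Ω : Type} [mΩ : MeasurableSpace Ω]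
    (P : Measure Ω) (ℱ : Filtration ℝ mΩ) (X : ℝ → Ω → Vec n) (ξ : Ω → Vec n) : Prop where
  measX : ∀ t, Measurable (X t)
  adaptX : Adapted ℱ X
  initX : ∀ᵐ ω ∂P, X 0 ω = ξ ω
  contX : ∀ ω, Continuous fun t => X t ω
  mart : ∀ U : Vec n → ℝ, TestFun U →
    MartOn P ℱ fun t ω =>
      U (X t ω) - ∫ s in Set.Ioc (0 : ℝ) t, genLim Θ A (P.map (X s)) U (X s ω)

/-- Generator of the synchronous coupling of two copies of the frozen equation,
driven by the same Brownian motion. -/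
def genPair {n m d : ℕ} (f : Vec n → Measure (Vec n) → Vec m → Vec m)
    (g : Vec n → Measure (Vec n) → Vec m → Mat m d) (x1 : Vec n) (μ1 : Measure (Vec n))
    (x2 : Vec n) (μ2 : Measure (Vec n)) (φ : Vec m → Vec m → ℝ) (y1 y2 : Vec m) : ℝ :=
  ⟪f x1 μ1 y1, gradient (fun z => φ z y2) y1⟫ + ⟪f x2 μ2 y2, gradient (φ y1) y2⟫ +
    (1 / 2) * trCLM (((g x1 μ1 y1).comp (adj (g x1 μ1 y1))).comp (hess (fun z => φ z y2) y1)) +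
    (1 / 2) * trCLM (((g x2 μ2 y2).comp (adj (g x2 μ2 y2))).comp (hess (φ y1) y2)) +
    trCLM (((g x1 μ1 y1).comp (adj (g x2 μ2 y2))).comp (hessMixed φ y1 y2))

/-- The uniform probability measure on `[0,1]`, a rich atomless probability space used
to define the Lions derivative by lifting to `L²`. -/
def P01 : Measure ℝ := volume.restrict (Set.Icc (0 : ℝ) 1)

/-- `D` is the Lions derivative of `u : 𝒫₂(ℝ^k) → E` at `μ`: the lift of `u` to
`L²(Ω₀; ℝ^k)` is Fréchet differentiable at every `X` with law `μ` with derivative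
represented by `D ∘ X`. -/
def IsLionsDeriv {k : ℕ} {E : Type*} [NormedAddCommGroup E] [NormedSpace ℝ E]
    [CompleteSpace E] (u : Measure (Vec k) → E) (μ : Measure (Vec k))
    (D : Vec k → (Vec k →L[ℝ] E)) : Prop :=
  ∀ X : Lp (Vec k) 2 P01, P01.map (X : ℝ → Vec k) = μ →
    ∃ L : Lp (Vec k) 2 P01 →L[ℝ] E,
      HasFDerivAt (fun Z : Lp (Vec k) 2 P01 => u (P01.map (Z : ℝ → Vec k))) L X ∧
        ∀ H : Lp (Vec k) 2 P01, L H = ∫ ω, D (X ω) (H ω) ∂P01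

/-- `L²(μ)`-norm of a kernel `D`. -/
def l2n {k : ℕ} {E : Type*} [NormedAddCommGroup E] (μ : Measure (Vec k)) (D : Vec k → E) : ℝ :=
  Real.sqrt (∫ z, ‖D z‖ ^ (2 : ℕ) ∂μ)

/-- `F(·, μ, ·) ∈ C_b^{3,3}` uniformly in `μ`:
three bounded continuous (mixed) derivatives in `(x,y)`. -/
def Cb3 {n m : ℕ} {E : Type*} [NormedAddCommGroup E] [NormedSpace ℝ E]
    (F : Vec n → Measure (Vec n) → Vec m → E) (CB : ℝ) : Prop :=
  ∀ μ : Measure (Vec n), memP2 μ →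
    ContDiff ℝ 3 (fun p : Vec n × Vec m => F p.1 μ p.2) ∧
      ∀ i : ℕ, 1 ≤ i → i ≤ 3 → ∀ p : Vec n × Vec m,
        ‖iteratedFDeriv ℝ i (fun q : Vec n × Vec m => F q.1 μ q.2) p‖ ≤ CB

/-- The Lions-derivative part of condition A3: `F` admits a Lions derivative in the
measure variable, bounded, with bounded and `γ₁`-Hölder (in `y`) derivatives. -/
def A3lions {n m : ℕ} {E : Type*} [NormedAddCommGroup E] [NormedSpace ℝ E] [CompleteSpace E]
    (F : Vec n → Measure (Vec n) → Vec m → E) (CB γ1 : ℝ) : Prop :=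
  ∃ D : Vec n → Measure (Vec n) → Vec m → Vec n → (Vec n →L[ℝ] E),
    (∀ x μ y, memP2 μ → IsLionsDeriv (fun μ' => F x μ' y) μ (D x μ y)) ∧
    (∀ x μ y z, ‖D x μ y z‖ ≤ CB) ∧
    (∀ x μ y z, ‖fderiv ℝ (D x μ y) z‖ ≤ CB) ∧
    (∀ x μ y1 y2 z,
      ‖fderiv ℝ (D x μ y1) z - fderiv ℝ (D x μ y2) z‖ ≤ CB * ‖y1 - y2‖ ^ γ1) ∧
    (∀ x μ z y, ‖fderiv ℝ (fun y' => D x μ y' z) y‖ ≤ CB) ∧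
    (∀ x μ z y1 y2,
      ‖fderiv ℝ (fun y' => D x μ y' z) y1 - fderiv ℝ (fun y' => D x μ y' z) y2‖ ≤
        CB * ‖y1 - y2‖ ^ γ1)

/-- Conditions A1–A3 of the paper for the coefficients of the slow–fast system. -/
structure SA13 {n m d : ℕ} (C : Coeffs n m d) where
  CL : ℝ
  γ : ℝ
  hγ : 0 < γ
  ς : ℝ
  hς : ς ∈ Set.Ioo (0 : ℝ) 1
  CG : ℝ
  CB : ℝ
  γ1 : ℝ
  hγ1 : γ1 ∈ Set.Ioc (0 : ℝ) 1
  lipSlow : ∀ x1 x2 μ1 μ2 y1 y2, memP2 μ1 → memP2 μ2 →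
    ‖C.b x1 μ1 y1 - C.b x2 μ2 y2‖ + ‖C.K x1 μ1 y1 - C.K x2 μ2 y2‖ +
        ‖C.σ x1 μ1 y1 - C.σ x2 μ2 y2‖ ≤
      CL * (‖x1 - x2‖ + ‖y1 - y2‖ + W2 μ1 μ2)
  lipFast : ∀ x1 x2 μ1 μ2 y1 y2, memP2 μ1 → memP2 μ2 →
    ‖C.f x1 μ1 y1 - C.f x2 μ2 y2‖ + ‖C.h x1 μ1 y1 - C.h x2 μ2 y2‖ +
        ‖C.g x1 μ1 y1 - C.g x2 μ2 y2‖ ≤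
      CL * (‖x1 - x2‖ + ‖y1 - y2‖ + W2 μ1 μ2)
  dissip : ∀ x μ y1 y2, memP2 μ →
    2 * ⟪C.f x μ y1 - C.f x μ y2, y1 - y2⟫ + ‖C.g x μ y1 - C.g x μ y2‖ ^ (2 : ℕ) ≤
      -γ * ‖y1 - y2‖ ^ (2 : ℕ)
  growth : ∀ x μ y, memP2 μ →
    ‖C.K x μ y‖ + ‖C.f x μ y‖ + ‖C.h x μ y‖ + ‖C.σ x μ y‖ ≤ CG * (1 + ‖y‖)
  growthg : ∀ x μ y, memP2 μ → ‖C.g x μ y‖ ≤ CG * (1 + ‖y‖ ^ ς)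
  smoothK : Cb3 C.K CB
  smoothf : Cb3 C.f CB
  smoothg : Cb3 C.g CB
  lionsK : A3lions C.K CB γ1
  lionsf : A3lions C.f CB γ1
  lionsg : A3lions C.g CB γ1

/-- Conditions A1–A4 of the paper, together with the invariant measures `ν^{x,μ}` of the
frozen equation and the solution `Φ` of the Poisson equation `-L₂(x,μ)Φ = K`. -/
structure SA {n m d : ℕ} (C : Coeffs n m d) extends SA13 C where
  ν : Vec n → Measure (Vec n) → Measure (Vec m)
  Φ : Vec n → Measure (Vec n) → Vec m → Vec n
  invν : ∀ x μ, memP2 μ → IsInvariantMeasure C.f C.g x μ (ν x μ)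
  uniqν : ∀ x μ, memP2 μ → ∀ ν' : Measure (Vec m), IsInvariantMeasure C.f C.g x μ ν' →
    ν' = ν x μ
  centering : ∀ x μ, memP2 μ → ∫ y, C.K x μ y ∂(ν x μ) = 0
  smoothΦ : ∀ μ, memP2 μ → ContDiff ℝ 3 fun p : Vec n × Vec m => Φ p.1 μ p.2
  poisson : ∀ x μ y (i : Fin n), memP2 μ →
    genFrozen C.f C.g x μ (fun y' => Φ x μ y' i) y = -(C.K x μ y i)

/-- The matrix-valued map `(∂_y Φ) g`. -/
def dyPhiG {n m d : ℕ} (Φ : Vec n → Measure (Vec n) → Vec m → Vec n)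
    (g : Vec n → Measure (Vec n) → Vec m → Mat m d) (x : Vec n) (μ : Measure (Vec n))
    (y : Vec m) : Mat n d :=
  (fderiv ℝ (fun y' => Φ x μ y') y).comp (g x μ y)

/-- Averaged drift `Θ(x,μ) = (b + ∂ₓΦ_K + ∂_yΦ_h + Tr[∂²_{xy}Φ_{σg*}])‾(x,μ)`. -/
def Theta {n m d : ℕ} (C : Coeffs n m d) (ν : Vec n → Measure (Vec n) → Measure (Vec m))
    (Φ : Vec n → Measure (Vec n) → Vec m → Vec n) (x : Vec n) (μ : Measure (Vec n)) :
    Vec n :=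
  ∫ y,
    (C.b x μ y + fderiv ℝ (fun x' => Φ x' μ y) x (C.K x μ y) +
      fderiv ℝ (fun y' => Φ x μ y') y (C.h x μ y) +
      (EuclideanSpace.equiv (Fin n) ℝ).symm fun i =>
        trCLM (((C.σ x μ y).comp (adj (C.g x μ y))).comp
          (fderiv ℝ (fun x' => gradient (fun y' => Φ x' μ y' i) y) x)))
    ∂(ν x μ)

/-- Averaged squared diffusion
`((K⊗Φ) + (K⊗Φ)* + (σg*)∂_yΦ + [(σg*)∂_yΦ]* + σσ*)‾(x,μ)`. -/
def AMat1 {n m d : ℕ} (C : Coeffs n m d) (ν : Vec n → Measure (Vec n) → Measure (Vec m))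
    (Φ : Vec n → Measure (Vec n) → Vec m → Vec n) (x : Vec n) (μ : Measure (Vec n)) :
    Mat n n :=
  ∫ y,
    (outer (C.K x μ y) (Φ x μ y) + adj (outer (C.K x μ y) (Φ x μ y)) +
      ((C.σ x μ y).comp (adj (C.g x μ y))).comp (adj (fderiv ℝ (fun y' => Φ x μ y') y)) +
      adj (((C.σ x μ y).comp (adj (C.g x μ y))).comp
        (adj (fderiv ℝ (fun y' => Φ x μ y') y))) +
      (C.σ x μ y).comp (adj (C.σ x μ y)))
    ∂(ν x μ)

/-- Averaged squared diffusion `((∂_yΦ_g + σ)(∂_yΦ_g + σ)*)‾(x,μ)`. -/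
def AMat2 {n m d : ℕ} (C : Coeffs n m d) (ν : Vec n → Measure (Vec n) → Measure (Vec m))
    (Φ : Vec n → Measure (Vec n) → Vec m → Vec n) (x : Vec n) (μ : Measure (Vec n)) :
    Mat n n :=
  ∫ y, ((dyPhiG Φ C.g x μ y + C.σ x μ y).comp (adj (dyPhiG Φ C.g x μ y + C.σ x μ y)))
    ∂(ν x μ)

/-- `A` is a symmetric positive semi-definite matrix. -/
def IsPSD {k : ℕ} (A : Mat k k) : Prop :=
  adj A = A ∧ ∀ v : Vec k, 0 ≤ ⟪A v, v⟫

instance instPathMeasurableSpace {α E : Type*} [TopologicalSpace α] [TopologicalSpace E] :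
    MeasurableSpace C(α, E) := borel _

/-- The path `t ↦ X t ω` on `[0,T]`, as an element of `C([0,T]; ℝ^k)`
(junk value if the path is not continuous). -/
def pathOf {Ω : Type} {k : ℕ} (X : ℝ → Ω → Vec k) (T : ℝ) (ω : Ω) :
    C(Set.Icc (0 : ℝ) T, Vec k) := by
  classical
  exact if h : Continuous fun t : ℝ => X t ω then
    ⟨fun t => X t.1 ω, h.comp continuous_subtype_val⟩
  else 0

/-- A family of measures is (uniformly) tight. -/
def TightFamily {α : Type*} [TopologicalSpace α] [MeasurableSpace α]
    (S : Set (Measure α)) : Prop :=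
  ∀ δ : ℝ, 0 < δ → ∃ Kc : Set α, IsCompact Kc ∧ ∀ μ ∈ S, μ Kcᶜ ≤ ENNReal.ofReal δ

/-- The frozen equation `dY_t = f(x,μ,Y_t) dt + g(x,μ,Y_t) dW_t` under conditions A1–A2:
`Y x μ y` is its solution starting from `y` (weak/martingale-problem formulation, with the
synchronous coupling of any two copies recorded via `martPair`), and `ν x μ` is its unique
invariant probability measure. -/
structure FrozenSetting (n m d : ℕ) (Ω : Type) [mΩ : MeasurableSpace Ω] (P : Measure Ω)
    (ℱ : Filtration ℝ mΩ) where
  f : Vec n → Measure (Vec n) → Vec m → Vec m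
  g : Vec n → Measure (Vec n) → Vec m → Mat m d
  CL : ℝ
  γ : ℝ
  hγ : 0 < γ
  ς : ℝ
  hς : ς ∈ Set.Ioo (0 : ℝ) 1
  CG : ℝ
  probP : IsProbabilityMeasure P
  lip : ∀ x1 x2 μ1 μ2 y1 y2, memP2 μ1 → memP2 μ2 →
    ‖f x1 μ1 y1 - f x2 μ2 y2‖ + ‖g x1 μ1 y1 - g x2 μ2 y2‖ ≤
      CL * (‖x1 - x2‖ + ‖y1 - y2‖ + W2 μ1 μ2)
  dissip : ∀ x μ y1 y2, memP2 μ →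
    2 * ⟪f x μ y1 - f x μ y2, y1 - y2⟫ + ‖g x μ y1 - g x μ y2‖ ^ (2 : ℕ) ≤
      -γ * ‖y1 - y2‖ ^ (2 : ℕ)
  growthf : ∀ x μ y, memP2 μ → ‖f x μ y‖ ≤ CG * (1 + ‖y‖)
  growthg : ∀ x μ y, memP2 μ → ‖g x μ y‖ ≤ CG * (1 + ‖y‖ ^ ς)
  Y : Vec n → Measure (Vec n) → Vec m → ℝ → Ω → Vec m
  measY : ∀ x μ y t, Measurable (Y x μ y t)
  initY : ∀ x μ y ω, Y x μ y 0 ω = y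
  contY : ∀ x μ y ω, Continuous fun t => Y x μ y t ω
  mart : ∀ x μ y, memP2 μ → ∀ φ : Vec m → ℝ, TestFun φ →
    MartOn P ℱ fun t ω =>
      φ (Y x μ y t ω) - ∫ s in Set.Ioc (0 : ℝ) t, genFrozen f g x μ φ (Y x μ y s ω)
  martPair : ∀ x1 μ1 y1 x2 μ2 y2, memP2 μ1 → memP2 μ2 → ∀ φ : Vec m → Vec m → ℝ,
    TestFun2 φ →
    MartOn P ℱ fun t ω =>
      φ (Y x1 μ1 y1 t ω) (Y x2 μ2 y2 t ω) -
        ∫ s in Set.Ioc (0 : ℝ) t,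
          genPair f g x1 μ1 x2 μ2 φ (Y x1 μ1 y1 s ω) (Y x2 μ2 y2 s ω)
  ν : Vec n → Measure (Vec n) → Measure (Vec m)
  invν : ∀ x μ, memP2 μ → IsInvariantMeasure f g x μ (ν x μ)
  uniqν : ∀ x μ, memP2 μ → ∀ ν' : Measure (Vec m), IsInvariantMeasure f g x μ ν' →
    ν' = ν x μ

/-- `Φ(x,μ,y) = ∫_0^∞ E[K(x, μ, Y_t^{x,μ,y})] dt`, the solution of the Poisson equation. -/
def PoissonPhi {n m d : ℕ} {Ω : Type} [mΩ : MeasurableSpace Ω] {P : Measure Ω}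
    {ℱ : Filtration ℝ mΩ} (FS : FrozenSetting n m d Ω P ℱ)
    (K : Vec n → Measure (Vec n) → Vec m → Vec n) (x : Vec n) (μ : Measure (Vec n))
    (y : Vec m) : Vec n :=
  ∫ t in Set.Ioi (0 : ℝ), (∫ ω, K x μ (FS.Y x μ y t ω) ∂P)

/-- Conditions A1–A4 for the coefficient `K` (relative to a frozen fast dynamics):
Lipschitz continuity, linear growth, the regularity condition A3 for `K, f, g`,
and the centering condition A4. -/
structure KAssumptions {n m d : ℕ} {Ω : Type} [mΩ : MeasurableSpace Ω] {P : Measure Ω}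
    {ℱ : Filtration ℝ mΩ} (FS : FrozenSetting n m d Ω P ℱ)
    (K : Vec n → Measure (Vec n) → Vec m → Vec n) where
  CK : ℝ
  CB : ℝ
  γ1 : ℝ
  hγ1 : γ1 ∈ Set.Ioc (0 : ℝ) 1
  lip : ∀ x1 x2 μ1 μ2 y1 y2, memP2 μ1 → memP2 μ2 →
    ‖K x1 μ1 y1 - K x2 μ2 y2‖ ≤ CK * (‖x1 - x2‖ + ‖y1 - y2‖ + W2 μ1 μ2)
  growth : ∀ x μ y, memP2 μ → ‖K x μ y‖ ≤ CK * (1 + ‖y‖)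
  smoothK : Cb3 K CB
  lionsK : A3lions K CB γ1
  smoothf : Cb3 FS.f CB
  lionsf : A3lions FS.f CB γ1
  smoothg : Cb3 FS.g CB
  lionsg : A3lions FS.g CB γ1
  centering : ∀ x μ, memP2 μ → ∫ y, K x μ y ∂(FS.ν x μ) = 0

end DiffApprox
namespace DiffApprox

/-! Let `V(y) = (1 + |y|²)^p`. Since `ς < 1`, the noise is of lower order than the dissipation, so
the generator `ℒ` of the fast component satisfies `ℒ V ≤ c / ε` once `√ε` is small, and
`V(Y_t) - c t / ε` is a supermartingale up to localization by compactly supported test functions.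
Stopping it at the exit from the ball of radius `r` gives the weak-type bound
`r^{2p} P(|Y_0| < r, sup_{[0,T]} |Y| > r) ≤ E[(V(Y_0) + c T / ε) 1_{|Y_0| < r}]`,
where the exit time is replaced by the first exit along finer and finer time grids, so that only
optional sampling at finitely many times is needed. The tail of `sup |Y|^p` thus decays like the
inverse square of the level, and the layer cake formula gives
`E sup |Y|^p ≤ (1 + 2^p) E max(1, |Y_0|^p) + c T / ε`; the constants are absorbed by `T / ε ≥ 1`. -/

theorem exists_nonneg_bound_of_eventually_nonpos {F : ℝ → ℝ} (hF : Continuous F)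
    (hnonpos : ∀ᶠ s in atTop, F s ≤ 0) : ∃ c ≥ 0, ∀ s ≥ 0, F s ≤ c := by
  obtain ⟨S, hS⟩ := eventually_atTop.1 hnonpos
  obtain ⟨B, hB⟩ := isCompact_Icc.bddAbove_image (K := Set.Icc 0 S) hF.continuousOn
  refine ⟨max 0 B, le_max_left _ _, fun s hs => ?_⟩
  rcases le_total s S with hsS | hSs
  · exact (hB ⟨s, ⟨hs, hsS⟩, rfl⟩).trans (le_max_right _ _)
  · exact (hS s hSs).trans (le_max_left _ _)

theorem eventually_sublinear_sq_le_mul_sq {a ς : ℝ} (ha : 0 < a) (hς : ς < 1) (b e : ℝ) :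
    ∀ᶠ s : ℝ in atTop, b * (1 + s) + e * (1 + s ^ ς) ^ 2 ≤ a * s ^ 2 := by
  have hinv : Tendsto (fun s : ℝ => s⁻¹) atTop (𝓝 0) := tendsto_inv_atTop_zero
  have hpow : Tendsto (fun s : ℝ => s ^ (-(1 - ς))) atTop (𝓝 0) :=
    tendsto_rpow_neg_atTop (sub_pos.2 hς)
  have hlim : Tendsto
      (fun s : ℝ => b * (s⁻¹ ^ 2 + s⁻¹) + e * (s⁻¹ + s ^ (-(1 - ς))) ^ 2) atTop (𝓝 0) := by
    simpa using (((hinv.pow 2).add hinv).const_mul b).add (((hinv.add hpow).pow 2).const_mul e)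
  filter_upwards [hlim.eventually_le_const ha, eventually_gt_atTop 0] with s hle hs
  have hς_split : s ^ ς = s * s ^ (-(1 - ς)) := by
    rw [neg_sub, Real.rpow_sub_one hs.ne', mul_div_cancel₀ _ hs.ne']
  calc b * (1 + s) + e * (1 + s ^ ς) ^ 2
      = (b * (s⁻¹ ^ 2 + s⁻¹) + e * (s⁻¹ + s ^ (-(1 - ς))) ^ 2) * s ^ 2 := by
        rw [hς_split]; field_simp
    _ ≤ a * s ^ 2 := by gcongr

theorem exists_rpow_mul_le_of_sublinear {a ς : ℝ} (ha : 0 < a) (hς : ς ∈ Set.Ico 0 1)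
    (b e r : ℝ) :
    ∃ c ≥ 0, ∀ s ≥ 0,
      (1 + s ^ 2) ^ r * (-a * s ^ 2 + (b * (1 + s) + e * (1 + s ^ ς) ^ 2)) ≤ c := by
  have hbase : ∀ s : ℝ, 0 < 1 + s ^ 2 := fun s => by positivity
  refine exists_nonneg_bound_of_eventually_nonpos ?_ ?_
  · exact ((by fun_prop : Continuous fun s : ℝ => 1 + s ^ 2).rpow_const
      fun s => Or.inl (hbase s).ne').mul (by
        have := Real.continuous_rpow_const hς.1
        fun_prop)
  · filter_upwards [eventually_sublinear_sq_le_mul_sq ha hς.2 b e] with s hs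
    exact mul_nonpos_of_nonneg_of_nonpos (Real.rpow_nonneg (hbase s).le r) (by linarith)

theorem trCLM_le {k : ℕ} (A : Vec k →L[ℝ] Vec k) : trCLM A ≤ k * ‖A‖ := by
  rw [trCLM, LinearMap.trace_eq_sum_inner _ (EuclideanSpace.basisFun (Fin k) ℝ)]
  calc ∑ i, ⟪EuclideanSpace.basisFun (Fin k) ℝ i, A (EuclideanSpace.basisFun (Fin k) ℝ i)⟫
      ≤ ∑ _i : Fin k, ‖A‖ := by
        refine Finset.sum_le_sum fun i _ => (real_inner_le_norm _ _).trans ?_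
        have hunit := (EuclideanSpace.basisFun (Fin k) ℝ).orthonormal.1 i
        simpa [hunit] using A.le_opNorm (EuclideanSpace.basisFun (Fin k) ℝ i)
    _ = k * ‖A‖ := by simp

/-! ### The Lyapunov function -/

section Lyapunov

variable {E : Type*} [NormedAddCommGroup E]

/-- The Lyapunov function `V(y) = (1 + |y|²)^q`, a smooth version of `|y|^{2q}`. -/
def lyapunov (q : ℝ) (y : E) : ℝ := (1 + ‖y‖ ^ 2) ^ q

theorem lyapunov_pos (q : ℝ) (y : E) : 0 < lyapunov q y := by
  unfold lyapunov; positivity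

theorem lyapunov_sub_one_mul (q : ℝ) (y : E) :
    lyapunov (q - 1) y * (1 + ‖y‖ ^ 2) = lyapunov q y := by
  rw [lyapunov, ← Real.rpow_add_one (by positivity), sub_add_cancel, lyapunov]

theorem rpow_sq_le_lyapunov {p r : ℝ} (hp : 0 ≤ p) (hr : 0 ≤ r) {y : E} (hy : r ≤ ‖y‖) :
    (r ^ p) ^ 2 ≤ lyapunov p y := by
  rw [Real.rpow_pow_comm hr]
  exact Real.rpow_le_rpow (sq_nonneg r)
    ((pow_le_pow_left₀ hr hy 2).trans (by linarith)) hp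

theorem lyapunov_le {p : ℝ} (hp : 0 ≤ p) (y : E) :
    lyapunov p y ≤ 2 ^ p * (max 1 (‖y‖ ^ p)) ^ 2 := by
  have hbase : 1 + ‖y‖ ^ 2 ≤ 2 * (max 1 ‖y‖) ^ 2 := by
    have hone : 1 ≤ (max 1 ‖y‖) ^ 2 := one_le_pow₀ (le_max_left _ _)
    have hnorm : ‖y‖ ^ 2 ≤ (max 1 ‖y‖) ^ 2 :=
      pow_le_pow_left₀ (norm_nonneg y) (le_max_right _ _) 2
    linarith
  have hmax : (max 1 ‖y‖) ^ p = max 1 (‖y‖ ^ p) := by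
    rw [Real.rpow_max zero_le_one (norm_nonneg y) hp, Real.one_rpow]
  calc lyapunov p y ≤ (2 * (max 1 ‖y‖) ^ 2) ^ p := Real.rpow_le_rpow (by positivity) hbase hp
    _ = 2 ^ p * (max 1 (‖y‖ ^ p)) ^ 2 := by
      rw [Real.mul_rpow zero_le_two (by positivity), ← hmax, Real.rpow_pow_comm (by positivity)]

variable [InnerProductSpace ℝ E]

theorem contDiff_lyapunov {k : WithTop ℕ∞} (q : ℝ) : ContDiff ℝ k (lyapunov q : E → ℝ) :=
  (contDiff_const.add (contDiff_norm_sq ℝ)).rpow_const_of_ne fun y => by positivity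

theorem hasFDerivAt_lyapunov (q : ℝ) (y : E) :
    HasFDerivAt (lyapunov q) ((2 * q * lyapunov (q - 1) y) • innerSL ℝ y) y := by
  have hsq : HasFDerivAt (fun z : E => 1 + ‖z‖ ^ 2) (2 • innerSL ℝ y) y :=
    (hasStrictFDerivAt_norm_sq y).hasFDerivAt.const_add 1
  refine (hsq.rpow_const (p := q) (Or.inl (by positivity))).congr_fderiv ?_
  ext v
  simp [lyapunov]
  ring

theorem gradient_lyapunov [CompleteSpace E] (q : ℝ) :
    gradient (lyapunov q : E → ℝ) = fun y => (2 * q * lyapunov (q - 1) y) • y := by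
  funext y
  refine HasGradientAt.gradient (hasGradientAt_iff_hasFDerivAt.2 ?_)
  refine (hasFDerivAt_lyapunov q y).congr_fderiv ?_
  ext v
  simp

end Lyapunov

theorem hess_lyapunov {k : ℕ} (q : ℝ) (y : Vec k) :
    hess (lyapunov q) y = (2 * q * lyapunov (q - 1) y) • ContinuousLinearMap.id ℝ (Vec k) +
      (4 * q * (q - 1) * lyapunov (q - 2) y) • outer y y := by
  have hderiv := ((hasFDerivAt_lyapunov (q - 1) y).const_mul (2 * q)).smul (hasFDerivAt_id y)
  rw [hess, gradient_lyapunov]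
  refine hderiv.fderiv.trans ?_
  ext v
  simp [outer, show q - 1 - 1 = q - 2 by ring]
  ring

theorem norm_hess_lyapunov_le {k : ℕ} (q : ℝ) (y : Vec k) :
    ‖hess (lyapunov q) y‖ ≤ (2 * |q| + 4 * |q| * |q - 1|) * lyapunov (q - 1) y := by
  have hV := lyapunov_pos (q - 1) y
  have hV' := lyapunov_pos (q - 2) y
  have hstep : lyapunov (q - 2) y * (1 + ‖y‖ ^ 2) = lyapunov (q - 1) y := by
    rw [← lyapunov_sub_one_mul (q - 1) y, show q - 1 - 1 = q - 2 by ring]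
  have houter : ‖outer y y‖ = ‖y‖ ^ 2 := by
    rw [outer, ContinuousLinearMap.norm_smulRight_apply, innerSL_apply_norm, sq]
  calc ‖hess (lyapunov q) y‖
      ≤ |2 * q * lyapunov (q - 1) y| * ‖ContinuousLinearMap.id ℝ (Vec k)‖ +
          |4 * q * (q - 1) * lyapunov (q - 2) y| * ‖outer y y‖ := by
        rw [hess_lyapunov]
        exact (norm_add_le _ _).trans_eq (by simp only [norm_smul, Real.norm_eq_abs])
    _ ≤ 2 * |q| * lyapunov (q - 1) y * 1 +
          4 * |q| * |q - 1| * (lyapunov (q - 2) y * (1 + ‖y‖ ^ 2)) := by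
        rw [houter]
        simp only [abs_mul, abs_of_pos hV, abs_of_pos hV', Nat.abs_ofNat]
        rw [mul_assoc (4 * |q| * |q - 1|)]
        have hid := ContinuousLinearMap.norm_id_le (𝕜 := ℝ) (E := Vec k)
        have hsq : ‖y‖ ^ 2 ≤ 1 + ‖y‖ ^ 2 := by linarith
        exact add_le_add (mul_le_mul_of_nonneg_left hid (by positivity))
          (mul_le_mul_of_nonneg_left (mul_le_mul_of_nonneg_left hsq hV'.le) (by positivity))
    _ = (2 * |q| + 4 * |q| * |q - 1|) * lyapunov (q - 1) y := by rw [hstep]; ring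

theorem hess_congr {k : ℕ} {φ ψ : Vec k → ℝ} {y : Vec k} (h : φ =ᶠ[𝓝 y] ψ) :
    hess φ y = hess ψ y :=
  h.gradient.fderiv_eq

/-- The generator of the fast component `Y^ε`: the part of `genSF` that survives on test
functions `ψ` of `y` alone. -/
def genFast {n m d : ℕ} (C : Coeffs n m d) (ε : ℝ) (x : Vec n) (μ : Measure (Vec n))
    (ψ : Vec m → ℝ) (y : Vec m) : ℝ :=
  ε⁻¹ * genFrozen C.f C.g x μ ψ y + (Real.sqrt ε)⁻¹ * ⟪C.h x μ y, gradient ψ y⟫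

theorem genSF_eq_genFast {n m d : ℕ} (C : Coeffs n m d) (ε : ℝ) (μ : Measure (Vec n))
    {φ : Vec n → Vec m → ℝ} {ψ : Vec m → ℝ} {x : Vec n} {y : Vec m}
    (h : ∀ᶠ q in 𝓝 (x, y), φ q.1 q.2 = ψ q.2) :
    genSF C ε μ φ x y = genFast C ε x μ ψ y := by
  have hnear : ∀ᶠ x' in 𝓝 x, φ x' =ᶠ[𝓝 y] ψ := h.curry_nhds
  have hy : φ x =ᶠ[𝓝 y] ψ := hnear.self_of_nhds
  have hx : (fun x' => φ x' y) =ᶠ[𝓝 x] fun _ => ψ y :=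
    hnear.mono fun _ hx' => hx'.self_of_nhds
  have hmixed : hessMixed φ x y = 0 := by
    have hconst : (fun x' => gradient (φ x') y) =ᶠ[𝓝 x] fun _ => gradient ψ y :=
      hnear.mono fun _ hx' => hx'.gradient_eq
    rw [hessMixed, hconst.fderiv_eq, fderiv_fun_const]
    rfl
  have hgrad_x : gradient (fun x' => φ x' y) x = 0 := by
    rw [hx.gradient_eq, gradient_fun_const]
  have hhess_x : hess (fun x' => φ x' y) x = 0 := by
    rw [hess_congr hx, hess, gradient_fun_const', fderiv_fun_const]
    rfl
  rw [genSF, hy.gradient_eq, hess_congr hy, hmixed, hgrad_x, hhess_x, genFast, genFrozen]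
  simp only [inner_zero_right, inner_add_left, real_inner_smul_left,
    ContinuousLinearMap.comp_zero, trCLM, ContinuousLinearMap.toLinearMap_zero, map_zero]
  ring

/-- Dissipativity and growth of the fast coefficients, uniformly in `(x, μ)`: the form in
which conditions A1 and A2 enter the moment bounds for `Y^ε`. -/
structure FastDissipative {n m d : ℕ} (C : Coeffs n m d) (γ ς G : ℝ) : Prop where
  γ_pos : 0 < γ
  ς_mem : ς ∈ Set.Ico 0 1
  G_pos : 0 < G
  inner_f_le : ∀ x μ y, memP2 μ → ⟪C.f x μ y, y⟫ ≤ -γ * ‖y‖ ^ 2 + G * (1 + ‖y‖)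
  norm_h_le : ∀ x μ y, memP2 μ → ‖C.h x μ y‖ ≤ G * (1 + ‖y‖)
  norm_g_le : ∀ x μ y, memP2 μ → ‖C.g x μ y‖ ≤ G * (1 + ‖y‖ ^ ς)

theorem SA13.fastDissipative {n m d : ℕ} {C : Coeffs n m d} (S : SA13 C) :
    FastDissipative C (S.γ / 2) S.ς (|S.CG| + 1) where
  γ_pos := half_pos S.hγ
  ς_mem := ⟨S.hς.1.le, S.hς.2⟩
  G_pos := by positivity
  inner_f_le x μ y hμ := by
    have hdissip := S.dissip x μ y 0 hμ
    have hgrowth := S.growth x μ 0 hμ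
    have hinner := real_inner_le_norm (C.f x μ 0) y
    rw [sub_zero, inner_sub_left] at hdissip
    rw [norm_zero, add_zero, mul_one] at hgrowth
    have hf0 : ‖C.f x μ 0‖ ≤ |S.CG| + 1 := by
      linarith [norm_nonneg (C.K x μ 0), norm_nonneg (C.h x μ 0), norm_nonneg (C.σ x μ 0),
        le_abs_self S.CG]
    have hf0y := mul_le_mul_of_nonneg_right hf0 (norm_nonneg y)
    linarith [sq_nonneg ‖C.g x μ y - C.g x μ 0‖, abs_nonneg S.CG]
  norm_h_le x μ y hμ := by
    have hCG : S.CG * (1 + ‖y‖) ≤ (|S.CG| + 1) * (1 + ‖y‖) := by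
      gcongr
      linarith [le_abs_self S.CG]
    linarith [S.growth x μ y hμ, norm_nonneg (C.K x μ y), norm_nonneg (C.f x μ y),
      norm_nonneg (C.σ x μ y)]
  norm_g_le x μ y hμ := (S.growthg x μ y hμ).trans (by
    gcongr
    linarith [le_abs_self S.CG])

theorem trCLM_comp_adj_comp_le {k l : ℕ} (A : Mat k l) (H : Mat k k) :
    trCLM ((A.comp (adj A)).comp H) ≤ k * (‖A‖ ^ 2 * ‖H‖) := by
  refine (trCLM_le _).trans (mul_le_mul_of_nonneg_left ?_ k.cast_nonneg)
  refine (ContinuousLinearMap.opNorm_comp_le _ _).trans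
    (mul_le_mul_of_nonneg_right ?_ (norm_nonneg H))
  refine (ContinuousLinearMap.opNorm_comp_le _ _).trans_eq ?_
  rw [adj, LinearIsometryEquiv.norm_map, sq]

namespace FastDissipative

variable {n m d : ℕ} {C : Coeffs n m d} {γ ς G q ε : ℝ} {x : Vec n} {μ : Measure (Vec n)}

-- The drift `h` acts at rate `ε^{-1/2}` only, so half of the dissipation absorbs it.
theorem sqrt_mul_inner_h_le (hC : FastDissipative C γ ς G) (hsmall : √ε * G ≤ γ / 2)
    (hμ : memP2 μ) (y : Vec m) :
    √ε * ⟪C.h x μ y, y⟫ ≤ γ / 2 * (‖y‖ ^ 2 + (1 + ‖y‖)) := by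
  have hinner : ⟪C.h x μ y, y⟫ ≤ G * (1 + ‖y‖) * ‖y‖ :=
    (real_inner_le_norm _ _).trans
      (mul_le_mul_of_nonneg_right (hC.norm_h_le x μ y hμ) (norm_nonneg y))
  have hγ := hC.γ_pos
  calc √ε * ⟪C.h x μ y, y⟫ ≤ √ε * (G * (1 + ‖y‖) * ‖y‖) := by gcongr
    _ = √ε * G * ((1 + ‖y‖) * ‖y‖) := by ring
    _ ≤ γ / 2 * (‖y‖ ^ 2 + (1 + ‖y‖)) := by
        gcongr
        linarith

theorem trCLM_hess_lyapunov_le (hC : FastDissipative C γ ς G) (hq : 0 ≤ q) (hμ : memP2 μ)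
    (y : Vec m) :
    trCLM (((C.g x μ y).comp (adj (C.g x μ y))).comp (hess (lyapunov q) y)) ≤
      m * ((G * (1 + ‖y‖ ^ ς)) ^ 2 * ((2 * q + 4 * q * |q - 1|) * lyapunov (q - 1) y)) := by
  refine (trCLM_comp_adj_comp_le _ _).trans ?_
  have hhess := norm_hess_lyapunov_le q y
  rw [abs_of_nonneg hq] at hhess
  have hg := hC.norm_g_le x μ y hμ
  gcongr

theorem genFast_lyapunov_le (hC : FastDissipative C γ ς G) (hq : 0 ≤ q) (hε : 0 < ε)
    (hsmall : √ε * G ≤ γ / 2) (hμ : memP2 μ) (y : Vec m) :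
    genFast C ε x μ (lyapunov q) y ≤ ε⁻¹ * ((1 + ‖y‖ ^ 2) ^ (q - 1) *
      (-(q * γ) * ‖y‖ ^ 2 + (q * (2 * G + γ) * (1 + ‖y‖) +
        m * (q + 2 * q * |q - 1|) * G ^ 2 * (1 + ‖y‖ ^ ς) ^ 2))) := by
  have hV := lyapunov_pos (q - 1) y
  calc genFast C ε x μ (lyapunov q) y
      = ε⁻¹ * (2 * q * lyapunov (q - 1) y * (⟪C.f x μ y, y⟫ + √ε * ⟪C.h x μ y, y⟫) +
          1 / 2 * trCLM (((C.g x μ y).comp (adj (C.g x μ y))).comp (hess (lyapunov q) y))) := by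
        rw [genFast, genFrozen, gradient_lyapunov, ← Real.sqrt_div_self, real_inner_smul_right,
          real_inner_smul_right]
        ring
    _ ≤ ε⁻¹ * (2 * q * lyapunov (q - 1) y *
            ((-γ * ‖y‖ ^ 2 + G * (1 + ‖y‖)) + γ / 2 * (‖y‖ ^ 2 + (1 + ‖y‖))) +
          1 / 2 * (m * ((G * (1 + ‖y‖ ^ ς)) ^ 2 *
            ((2 * q + 4 * q * |q - 1|) * lyapunov (q - 1) y)))) := by
        have hf := hC.inner_f_le x μ y hμ
        have hh := hC.sqrt_mul_inner_h_le hsmall (x := x) hμ y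
        have hg := hC.trCLM_hess_lyapunov_le hq (x := x) hμ y
        gcongr
    _ = _ := by rw [lyapunov]; ring

theorem exists_genFast_lyapunov_le
    (hC : FastDissipative C γ ς G) (hq : 0 < q) :
    ∃ c ≥ 0, ∀ ε > 0, √ε * G ≤ γ / 2 →
      ∀ (x : Vec n) (μ : Measure (Vec n)) (y : Vec m), memP2 μ →
        genFast C ε x μ (lyapunov q) y ≤ c / ε := by
  obtain ⟨c, hc, hbound⟩ := exists_rpow_mul_le_of_sublinear (mul_pos hq hC.γ_pos) hC.ς_mem
    (q * (2 * G + γ)) (m * (q + 2 * q * |q - 1|) * G ^ 2) (q - 1)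
  refine ⟨c, hc, fun ε hε hsmall x μ y hμ => (hC.genFast_lyapunov_le hq.le hε hsmall hμ y).trans ?_⟩
  rw [div_eq_inv_mul]
  gcongr
  exact hbound ‖y‖ (norm_nonneg y)

end FastDissipative

/-! ### Martingales and optional sampling on a grid -/

theorem measurableSet_forall_mem_le {α Ω : Type*} [TopologicalSpace α]
    [TopologicalSpace.PseudoMetrizableSpace α] [TopologicalSpace.SeparableSpace α]
    {m : MeasurableSpace Ω} {u : α → Ω → ℝ} (hc : ∀ ω, Continuous fun s => u s ω) {K : Set α}
    (hu : ∀ s ∈ K, Measurable (u s)) (c : ℝ) : MeasurableSet {ω | ∀ s ∈ K, u s ω ≤ c} := by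
  obtain ⟨D, hDK, hD, hKD⟩ :=
    (TopologicalSpace.IsSeparable.of_separableSpace K).exists_countable_dense_subset
  have hdense : {ω | ∀ s ∈ K, u s ω ≤ c} = ⋂ s ∈ D, {ω | u s ω ≤ c} := by
    ext ω
    simp only [Set.mem_ofPred_eq, Set.mem_iInter]
    refine ⟨fun h s hs => h s (hDK hs), fun h s hs => ?_⟩
    exact closure_minimal h (isClosed_le (hc ω) continuous_const) (hKD hs)
  rw [hdense]
  exact MeasurableSet.biInter hD fun s hs => hu s (hDK hs) measurableSet_Iic

theorem tendsto_setIntegral_of_eventually_mem_iff {Ω ι : Type*} [MeasurableSpace Ω]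
    {P : Measure Ω} {L : Filter ι} [L.IsCountablyGenerated] {f : Ω → ℝ} (hf : Integrable f P)
    {S : ι → Set Ω} {A : Set Ω} (hS : ∀ i, MeasurableSet (S i)) (hA : MeasurableSet A)
    (hSA : ∀ ω, ∀ᶠ i in L, ω ∈ S i ↔ ω ∈ A) :
    Tendsto (fun i => ∫ ω in S i, f ω ∂P) L (𝓝 (∫ ω in A, f ω ∂P)) := by
  simp_rw [← integral_indicator hA, ← integral_indicator (hS _)]
  refine tendsto_integral_filter_of_dominated_convergence (fun ω => ‖f ω‖)
    (Eventually.of_forall fun i => (hf.indicator (hS i)).aestronglyMeasurable)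
    (Eventually.of_forall fun i => ae_of_all _ fun ω => norm_indicator_le_norm_self f ω)
    hf.norm (ae_of_all _ fun ω => tendsto_nhds_of_eventually_eq ?_)
  filter_upwards [hSA ω] with i hi
  by_cases hω : ω ∈ A
  · rw [Set.indicator_of_mem (hi.2 hω), Set.indicator_of_mem hω]
  · rw [Set.indicator_of_notMem (mt hi.1 hω), Set.indicator_of_notMem hω]

namespace MartOn

variable {Ω : Type} {mΩ : MeasurableSpace Ω} {P : Measure Ω} [IsFiniteMeasure P]
  {ℱ : Filtration ℝ mΩ} {M : ℝ → Ω → ℝ}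

theorem add_const (hM : MartOn P ℱ M) (c : ℝ) : MartOn P ℱ fun t ω => M t ω + c := by
  refine ⟨fun t ht => ⟨(hM.1 t ht).1.add stronglyMeasurable_const,
    (hM.1 t ht).2.add (integrable_const c)⟩, fun s t hs hst => ?_⟩
  refine (condExp_add (hM.1 t (hs.trans hst)).2 (integrable_const c) _).trans ?_
  filter_upwards [hM.2 s t hs hst] with ω hω
  rw [Pi.add_apply, hω, condExp_const (ℱ.le s)]

theorem setIntegral_eq (hM : MartOn P ℱ M) {s t : ℝ} (hs : 0 ≤ s) (hst : s ≤ t) {A : Set Ω}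
    (hA : MeasurableSet[ℱ s] A) : ∫ ω in A, M t ω ∂P = ∫ ω in A, M s ω ∂P := by
  rw [← setIntegral_condExp (ℱ.le s) (hM.1 t (hs.trans hst)).2 hA]
  exact setIntegral_congr_ae (ℱ.le s A hA) ((hM.2 s t hs hst).mono fun _ h _ => h)

theorem sum_setIntegral_eq (hM : MartOn P ℱ M) {ι : Type*} {I : Finset ι} {t : ι → ℝ} {T : ℝ}
    {B : ι → Set Ω} (ht : ∀ i ∈ I, t i ∈ Set.Icc 0 T) (hB : ∀ i ∈ I, MeasurableSet[ℱ (t i)] (B i))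
    (hdisj : (I : Set ι).Pairwise (Function.onFun Disjoint B)) (hT : 0 ≤ T) :
    ∑ i ∈ I, ∫ ω in B i, M (t i) ω ∂P = ∫ ω in ⋃ i ∈ I, B i, M T ω ∂P := by
  rw [integral_biUnion_finset I (fun i hi => ℱ.le _ _ (hB i hi)) hdisj
    fun i _ => (hM.1 T hT).2.integrableOn]
  exact Finset.sum_congr rfl fun i hi => (hM.setIntegral_eq (ht i hi).1 (ht i hi).2 (hB i hi)).symm

-- The family `(B i, t i)` encodes a stopping time with values `t i` on `B i`.
theorem mul_measureReal_le_setIntegral (hM : MartOn P ℱ M) {ι : Type*} {I : Finset ι}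
    {t : ι → ℝ} {T l : ℝ} {B : ι → Set Ω} {E : Set Ω} (hT : 0 ≤ T)
    (ht : ∀ i ∈ I, t i ∈ Set.Icc 0 T) (hB : ∀ i ∈ I, MeasurableSet[ℱ (t i)] (B i))
    (hdisj : (I : Set ι).Pairwise (Function.onFun Disjoint B)) (hE : MeasurableSet E)
    (hpos : ∀ i ∈ I, ∀ ω ∈ B i, 0 ≤ M (t i) ω)
    (hl : ∀ i ∈ I, ∀ ω ∈ B i, ω ∈ E → l ≤ M (t i) ω) :
    l * P.real (E ∩ ⋃ i ∈ I, B i) ≤ ∫ ω in ⋃ i ∈ I, B i, M T ω ∂P := by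
  have hBm : ∀ i ∈ I, MeasurableSet (B i) := fun i hi => ℱ.le _ _ (hB i hi)
  have hlE : Integrable (E.indicator fun _ => l) P := (integrable_const l).indicator hE
  calc l * P.real (E ∩ ⋃ i ∈ I, B i)
      = ∫ ω in ⋃ i ∈ I, B i, E.indicator (fun _ => l) ω ∂P := by
        rw [integral_indicator_const l hE, measureReal_restrict_apply hE, smul_eq_mul, mul_comm]
    _ = ∑ i ∈ I, ∫ ω in B i, E.indicator (fun _ => l) ω ∂P :=
        integral_biUnion_finset I hBm hdisj fun i _ => hlE.integrableOn
    _ ≤ ∑ i ∈ I, ∫ ω in B i, M (t i) ω ∂P := by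
        refine Finset.sum_le_sum fun i hi => setIntegral_mono_on hlE.integrableOn
          (hM.1 _ (ht i hi).1).2.integrableOn (hBm i hi) fun ω hω => ?_
        by_cases hωE : ω ∈ E
        · exact (Set.indicator_of_mem hωE _).trans_le (hl i hi ω hω hωE)
        · exact (Set.indicator_of_notMem hωE _).trans_le (hpos i hi ω hω)
    _ = ∫ ω in ⋃ i ∈ I, B i, M T ω ∂P := hM.sum_setIntegral_eq ht hB hdisj hT

end MartOn

/-- The `k`-th point of the grid dividing `[0, T]` into `N` equal steps. -/
def gridTime (T : ℝ) (N k : ℕ) : ℝ := k * (T / N)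

theorem gridTime_mono {T : ℝ} (hT : 0 ≤ T) (N : ℕ) : Monotone (gridTime T N) := fun _ _ hij =>
  mul_le_mul_of_nonneg_right (Nat.cast_le.2 hij) (div_nonneg hT N.cast_nonneg)

theorem gridTime_zero (T : ℝ) (N : ℕ) : gridTime T N 0 = 0 := by simp [gridTime]

theorem gridTime_self (T : ℝ) {N : ℕ} (hN : N ≠ 0) : gridTime T N N = T :=
  mul_div_cancel₀ T (Nat.cast_ne_zero.2 hN)

theorem gridTime_mem_Icc {T : ℝ} (hT : 0 ≤ T) {N k : ℕ} (hk : k ∈ Finset.Icc 1 N) :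
    gridTime T N k ∈ Set.Icc 0 T := by
  obtain ⟨hk1, hkN⟩ := Finset.mem_Icc.1 hk
  constructor
  · exact (gridTime_zero T N).symm.trans_le (gridTime_mono hT N k.zero_le)
  · exact (gridTime_mono hT N hkN).trans_eq (gridTime_self T (by omega))

theorem exists_gridTime_near (T : ℝ) (N k : ℕ) {s : ℝ}
    (hs : s ∈ Set.Icc 0 (gridTime T N (k + 1))) :
    ∃ j ≤ k, s ∈ Set.Icc (gridTime T N j) (gridTime T N j + T / N) := by
  have hsucc : ∀ j, gridTime T N (j + 1) = gridTime T N j + T / N := fun j => by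
    simp only [gridTime]
    push_cast
    ring
  induction k with
  | zero => exact ⟨0, le_rfl, (gridTime_zero T N).trans_le hs.1, hs.2.trans_eq (hsucc 0)⟩
  | succ k ih =>
    rcases le_total s (gridTime T N (k + 1)) with hle | hge
    · obtain ⟨j, hj, hsj⟩ := ih ⟨hs.1, hle⟩
      exact ⟨j, hj.trans k.le_succ, hsj⟩
    · exact ⟨k + 1, le_rfl, hge, hs.2.trans_eq (hsucc _)⟩

theorem eventually_exists_gridTime_nonneg {u : ℝ → ℝ} (hu : Continuous u) {T t : ℝ}
    (ht : t ∈ Set.Icc 0 T) (hpos : 0 < u t) :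
    ∀ᶠ N : ℕ in atTop, ∃ j ≤ N, 0 ≤ u (gridTime T N j) := by
  obtain ⟨δ, hδ, hnear⟩ := Metric.eventually_nhds_iff.1 (hu.continuousAt.eventually_const_lt hpos)
  filter_upwards [(tendsto_const_div_atTop_nhds_zero_nat T).eventually_lt_const hδ,
    eventually_ge_atTop 1] with N hmesh hN
  obtain ⟨k, rfl⟩ := Nat.exists_eq_add_of_le' hN
  obtain ⟨j, hj, htj⟩ :=
    exists_gridTime_near T (k + 1) k ⟨ht.1, ht.2.trans_eq (gridTime_self T k.succ_ne_zero).symm⟩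
  refine ⟨j, hj.trans k.le_succ, (hnear ?_).le⟩
  rw [Real.dist_eq, abs_sub_lt_iff]
  constructor <;> linarith [htj.1, htj.2]

-- On a fine grid a continuous path moves by less than one unit within one step.
theorem eventually_le_one_of_gridTime_neg {u : ℝ → ℝ} (hu : Continuous u) {T : ℝ} (hT : 0 ≤ T) :
    ∀ᶠ N : ℕ in atTop, ∀ k ∈ Finset.Icc 1 N, (∀ j < k, u (gridTime T N j) < 0) →
      ∀ s ∈ Set.Icc 0 (gridTime T N k), u s ≤ 1 := by
  obtain ⟨δ, hδ, hunif⟩ := Metric.uniformContinuousOn_iff.1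
    (isCompact_Icc.uniformContinuousOn_of_continuous (s := Set.Icc 0 T) hu.continuousOn) 1 one_pos
  filter_upwards [(tendsto_const_div_atTop_nhds_zero_nat T).eventually_lt_const hδ]
    with N hmesh k hk hneg s hs
  have htk := gridTime_mem_Icc hT hk
  obtain ⟨i, rfl⟩ := Nat.exists_eq_add_of_le' (Finset.mem_Icc.1 hk).1
  obtain ⟨j, hj, hsj⟩ := exists_gridTime_near T N i hs
  have htj : gridTime T N j ∈ Set.Icc 0 T :=
    ⟨(gridTime_zero T N).symm.trans_le (gridTime_mono hT N j.zero_le),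
      (gridTime_mono hT N (by omega)).trans htk.2⟩
  have hclose := hunif s ⟨hs.1, hs.2.trans htk.2⟩ _ htj (by
    rw [Real.dist_eq, abs_sub_lt_iff]
    constructor <;> linarith [hsj.1, hsj.2])
  rw [Real.dist_eq, abs_sub_lt_iff] at hclose
  linarith [hclose.1, hneg j (by omega)]

/-- `k` is the first index at which the path `u`, observed on the grid with `N` steps, is
nonnegative, capped at `N` if there is none. -/
def IsFirstGridHit (u : ℝ → ℝ) (T : ℝ) (N k : ℕ) : Prop :=
  (∀ j < k, u (gridTime T N j) < 0) ∧ (0 ≤ u (gridTime T N k) ∨ k = N)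

theorem IsFirstGridHit.eq {u : ℝ → ℝ} {T : ℝ} {N i j : ℕ} (hi : IsFirstGridHit u T N i)
    (hj : IsFirstGridHit u T N j) (hiN : i ≤ N) (hjN : j ≤ N) : i = j := by
  wlog hij : i < j generalizing i j
  · rcases (not_lt.1 hij).eq_or_lt with h | h
    · exact h.symm
    · exact (this hj hi hjN hiN h).symm
  rcases hi.2 with hhit | hcap
  · exact absurd (hj.1 i hij) hhit.not_gt
  · omega

theorem exists_isFirstGridHit {u : ℝ → ℝ} (h0 : u 0 < 0) (T : ℝ) {N : ℕ} (hN : N ≠ 0) :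
    ∃ k ∈ Finset.Icc 1 N, IsFirstGridHit u T N k := by
  classical
  have hex : ∃ k, 0 ≤ u (gridTime T N k) ∨ k = N := ⟨N, Or.inr rfl⟩
  refine ⟨Nat.find hex, Finset.mem_Icc.2 ⟨?_, Nat.find_min' hex (Or.inr rfl)⟩,
    fun j hj => not_le.1 fun h => Nat.find_min hex hj (Or.inl h), Nat.find_spec hex⟩
  refine Nat.one_le_iff_ne_zero.2 fun hzero => ?_
  rcases hzero ▸ Nat.find_spec hex with h | h
  · rw [gridTime_zero] at h
    exact h.not_gt h0
  · exact hN h.symm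

section MaximalInequality

variable {Ω : Type} {w : ℝ → Ω → ℝ} {T : ℝ} {N k : ℕ}

/-- The event that the `k`-th grid time is the first (capped) grid hit of `w` and `w` has not
exceeded `1` before. Its members for `1 ≤ k ≤ N` discretise stopping `w` when it becomes
nonnegative, without overshooting the level `1`. -/
def gridExit (w : ℝ → Ω → ℝ) (T : ℝ) (N k : ℕ) : Set Ω :=
  {ω | IsFirstGridHit (w · ω) T N k ∧ ∀ s ∈ Set.Icc 0 (gridTime T N k), w s ω ≤ 1}

theorem pairwise_disjoint_gridExit :
    (Finset.Icc 1 N : Set ℕ).Pairwise (Function.onFun Disjoint (gridExit w T N)) :=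
  fun _ hi _ hj hij => Set.disjoint_left.2 fun _ hωi hωj =>
    hij (hωi.1.eq hωj.1 (Finset.mem_Icc.1 hi).2 (Finset.mem_Icc.1 hj).2)

theorem eventually_mem_iUnion_gridExit_iff {ω : Ω} (hc : Continuous fun t => w t ω) (hT : 0 ≤ T) :
    ∀ᶠ N : ℕ in atTop, ω ∈ ⋃ k ∈ Finset.Icc 1 N, gridExit w T N k ↔ w 0 ω < 0 := by
  filter_upwards [eventually_ge_atTop 1, eventually_le_one_of_gridTime_neg hc hT] with N hN htame
  constructor
  · intro hω
    obtain ⟨k, hk, hωk⟩ := Set.mem_iUnion₂.1 hω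
    simpa only [gridTime_zero] using hωk.1.1 0 (Finset.mem_Icc.1 hk).1
  · intro h0
    obtain ⟨k, hk, hhit⟩ := exists_isFirstGridHit (u := (w · ω)) h0 T (Nat.one_le_iff_ne_zero.1 hN)
    exact Set.mem_iUnion₂.2 ⟨k, hk, hhit, htame k hk hhit.1⟩

theorem IsFirstGridHit.nonneg {u : ℝ → ℝ} (hk : IsFirstGridHit u T N k)
    (hN : ∃ j ≤ N, 0 ≤ u (gridTime T N j)) : 0 ≤ u (gridTime T N k) := by
  rcases hk.2 with hhit | rfl
  · exact hhit
  · obtain ⟨j, hj, hhit⟩ := hN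
    rcases hj.lt_or_eq with hlt | rfl
    · exact absurd (hk.1 j hlt) hhit.not_gt
    · exact hhit

variable {mΩ : MeasurableSpace Ω} {ℱ : Filtration ℝ mΩ}

theorem measurableSet_gridExit (hw : Adapted ℱ w) (hc : ∀ ω, Continuous fun t => w t ω)
    (hT : 0 ≤ T) : MeasurableSet[ℱ (gridTime T N k)] (gridExit w T N k) := by
  have hpast : ∀ s ≤ gridTime T N k, Measurable[ℱ (gridTime T N k)] (w s) := fun s hs =>
    (hw s).mono (ℱ.mono hs) le_rfl
  have hbefore : MeasurableSet[ℱ (gridTime T N k)] {ω | ∀ j < k, w (gridTime T N j) ω < 0} := by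
    simp only [Set.ofPred_forall]
    exact MeasurableSet.iInter fun j => MeasurableSet.iInter fun hj =>
      hpast _ (gridTime_mono hT N hj.le) measurableSet_Iio
  have hhit : MeasurableSet[ℱ (gridTime T N k)] {ω | 0 ≤ w (gridTime T N k) ω ∨ k = N} :=
    MeasurableSet.union (hpast _ le_rfl measurableSet_Ici) (MeasurableSet.const _)
  exact (hbefore.inter hhit).inter (measurableSet_forall_mem_le hc (fun s hs => hpast s hs.2) 1)

theorem MartOn.mul_measureReal_le_setIntegral_zero {P : Measure Ω} [IsFiniteMeasure P]
    {M : ℝ → Ω → ℝ} {l : ℝ} {E : Set Ω} (hM : MartOn P ℱ M) (hw : Adapted ℱ w)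
    (hc : ∀ ω, Continuous fun t => w t ω) (hT : 0 ≤ T) (hE : MeasurableSet E)
    (hE0 : ∀ ω ∈ E, w 0 ω < 0) (hEhit : ∀ ω ∈ E, ∃ t ∈ Set.Icc 0 T, 0 < w t ω)
    (hpos : ∀ t ∈ Set.Icc 0 T, ∀ ω, (∀ s ∈ Set.Icc 0 t, w s ω ≤ 1) → 0 ≤ M t ω)
    (hl : ∀ t ∈ Set.Icc 0 T, ∀ ω ∈ E, (∀ s ∈ Set.Icc 0 t, w s ω ≤ 1) → 0 ≤ w t ω → l ≤ M t ω) :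
    l * P.real E ≤ ∫ ω in {ω | w 0 ω < 0}, M 0 ω ∂P := by
  have hwm : ∀ t, Measurable (w t) := fun t => (hw t).mono (ℱ.le t) le_rfl
  have hstart : MeasurableSet[ℱ 0] {ω | w 0 ω < 0} := hw 0 measurableSet_Iio
  set S : ℕ → Set Ω := fun N => ⋃ k ∈ Finset.Icc 1 N, gridExit w T N k
  set H : ℕ → Set Ω := fun N => E ∩ ⋃ j ∈ Set.Iic N, {ω | 0 ≤ w (gridTime T N j) ω}
  have hSm : ∀ N, MeasurableSet (S N) := fun N => Finset.measurableSet_biUnion _ fun k _ =>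
    ℱ.le _ _ (measurableSet_gridExit hw hc hT)
  have hHm : ∀ N, MeasurableSet (H N) := fun N => hE.inter
    (MeasurableSet.biUnion (Set.to_countable _) fun j _ => hwm _ measurableSet_Ici)
  have hdiscrete : ∀ N, l * P.real (H N ∩ S N) ≤ ∫ ω in S N, M T ω ∂P := fun N =>
    hM.mul_measureReal_le_setIntegral hT (fun k hk => gridTime_mem_Icc hT hk)
      (fun k _ => measurableSet_gridExit hw hc hT) pairwise_disjoint_gridExit (hHm N)
      (fun k hk ω hω => hpos _ (gridTime_mem_Icc hT hk) ω hω.2)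
      fun k hk ω hω hωH => hl _ (gridTime_mem_Icc hT hk) ω hωH.1 hω.2
        (hω.1.nonneg (by simpa using hωH.2))
  have hSlim : ∀ ω, ∀ᶠ N in atTop, ω ∈ S N ↔ w 0 ω < 0 := fun ω =>
    eventually_mem_iUnion_gridExit_iff (hc ω) hT
  have hHlim : ∀ ω, ∀ᶠ N in atTop, ω ∈ H N ∩ S N ↔ ω ∈ E := by
    intro ω
    by_cases hω : ω ∈ E
    · obtain ⟨t, ht, hwt⟩ := hEhit ω hω
      filter_upwards [hSlim ω, eventually_exists_gridTime_nonneg (hc ω) ht hwt] with N hSN hHN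
      exact iff_of_true ⟨⟨hω, by simpa using hHN⟩, hSN.2 (hE0 ω hω)⟩ hω
    · exact Eventually.of_forall fun N => iff_of_false (fun h => hω h.1.1) hω
  have hlimE := (ENNReal.tendsto_toReal (measure_ne_top P E)).comp
    (tendsto_measure_of_tendsto_indicator_of_isFiniteMeasure atTop P
      (fun N => (hHm N).inter (hSm N)) hHlim)
  calc l * P.real E ≤ ∫ ω in {ω | w 0 ω < 0}, M T ω ∂P :=
        le_of_tendsto_of_tendsto' (hlimE.const_mul l)
          (tendsto_setIntegral_of_eventually_mem_iff (hM.1 T hT).2 hSm (ℱ.le 0 _ hstart) hSlim)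
          hdiscrete
    _ = ∫ ω in {ω | w 0 ω < 0}, M 0 ω ∂P := hM.setIntegral_eq le_rfl hT hstart

end MaximalInequality

/-! ### Localization and the exit estimate -/

theorem exists_testFun2_eq {k l : ℕ} {ψ : Vec l → ℝ} (hψ : ContDiff ℝ 2 ψ) (ρ : ℝ) :
    ∃ φ : Vec k → Vec l → ℝ, TestFun2 φ ∧ ∀ x y, ‖x‖ < ρ → ‖y‖ < ρ → φ x y = ψ y := by
  let β : ContDiffBump (0 : Vec k × Vec l) := ⟨|ρ| + 1, |ρ| + 2, by positivity, by linarith⟩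
  refine ⟨fun x y => β (x, y) * ψ y, ⟨?_, ?_⟩, fun x y hx hy => ?_⟩
  · exact β.contDiff.mul (hψ.comp contDiff_snd)
  · exact β.hasCompactSupport.mul_right
  · have hmem : (x, y) ∈ Metric.closedBall 0 β.rIn := by
      rw [mem_closedBall_zero_iff, Prod.norm_mk]
      have hρ : ρ ≤ |ρ| + 1 := (le_abs_self ρ).trans (by linarith)
      exact max_le (hx.le.trans hρ) (hy.le.trans hρ)
    simp only [β.one_of_mem_closedBall hmem, one_mul]

theorem setIntegral_Ioc_le_mul {G : ℝ → ℝ} {c t : ℝ} (hc : 0 ≤ c) (ht : 0 ≤ t)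
    (hG : ∀ s ∈ Set.Ioc 0 t, G s ≤ c) : ∫ s in Set.Ioc 0 t, G s ≤ c * t := by
  by_cases hint : IntegrableOn G (Set.Ioc 0 t)
  · calc ∫ s in Set.Ioc 0 t, G s ≤ ∫ _ in Set.Ioc 0 t, c :=
          setIntegral_mono_on hint (integrableOn_const (by simp)) measurableSet_Ioc hG
      _ = c * t := by simp [ht, mul_comm]
  · rw [integral_undef hint]
    positivity

theorem ofReal_mul_measure_le_setLIntegral {Ω : Type*} [MeasurableSpace Ω] {P : Measure Ω}
    [IsFiniteMeasure P] {f : Ω → ℝ} {A E : Set Ω} {l : ℝ} (hf : IntegrableOn f A P)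
    (hA : MeasurableSet A) (hf0 : ∀ ω ∈ A, 0 ≤ f ω) (hle : l * P.real E ≤ ∫ ω in A, f ω ∂P) :
    ENNReal.ofReal l * P E ≤ ∫⁻ ω in A, ENNReal.ofReal (f ω) ∂P := by
  rw [← ofReal_integral_eq_lintegral_ofReal hf ((ae_restrict_mem hA).mono hf0),
    ← ofReal_measureReal (μ := P), ← ENNReal.ofReal_mul' measureReal_nonneg]
  exact ENNReal.ofReal_le_ofReal hle

namespace IsSFSolution

variable {n m d : ℕ} {C : Coeffs n m d} {ε : ℝ} {Ω : Type} [mΩ : MeasurableSpace Ω]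
  {P : Measure Ω} {ℱ : Filtration ℝ mΩ} {X : ℝ → Ω → Vec n}
  {Y : ℝ → Ω → Vec m} {ξ : Ω → Vec n} {ζ : Ω → Vec m} {ψ : Vec m → ℝ} {c T l r : ℝ}

theorem measurableSet_exit (hsol : IsSFSolution C ε P ℱ X Y ξ ζ) (r T R : ℝ) :
    MeasurableSet {ω | ‖Y 0 ω‖ < r ∧ (∃ t ∈ Set.Icc 0 T, r < ‖Y t ω‖) ∧
      ∀ t ∈ Set.Icc 0 T, ‖X t ω‖ ≤ R} := by
  have hstart : MeasurableSet {ω | ‖Y 0 ω‖ < r} := (hsol.measY 0).norm measurableSet_Iio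
  have hX := measurableSet_forall_mem_le (fun ω => (hsol.contX ω).norm) (K := Set.Icc 0 T)
    (fun s _ => (hsol.measX s).norm) R
  have hY := measurableSet_forall_mem_le (fun ω => (hsol.contY ω).norm) (K := Set.Icc 0 T)
    (fun s _ => (hsol.measY s).norm) r
  convert hstart.inter (hY.compl.inter hX) using 1
  ext ω
  simp [and_assoc]

variable [IsFiniteMeasure P]

-- Up to the exit from the ball of radius `ρ`, the process `ψ(Y_t) + c (T - t)` is a
-- supermartingale; `M` is the martingale part of its decomposition.
theorem exists_martOn_ge (hsol : IsSFSolution C ε P ℱ X Y ξ ζ) (hψ : ContDiff ℝ 2 ψ)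
    (hc : 0 ≤ c) (hgen : ∀ x μ y, memP2 μ → genFast C ε x μ ψ y ≤ c) (T ρ : ℝ) :
    ∃ M : ℝ → Ω → ℝ, MartOn P ℱ M ∧
      (∀ ω, ‖X 0 ω‖ < ρ → ‖Y 0 ω‖ < ρ → M 0 ω = ψ (Y 0 ω) + c * T) ∧
      ∀ t ∈ Set.Icc 0 T, ∀ ω, (∀ s ∈ Set.Icc 0 t, ‖X s ω‖ < ρ ∧ ‖Y s ω‖ < ρ) →
        ψ (Y t ω) ≤ M t ω := by
  obtain ⟨φ, hφ, hφψ⟩ := exists_testFun2_eq (k := n) hψ ρ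
  refine ⟨_, (hsol.mart φ hφ).add_const (c * T), fun ω hX hY => by simp [hφψ _ _ hX hY],
    fun t ht ω hin => ?_⟩
  have hdrift : ∫ s in Set.Ioc 0 t, genSF C ε (P.map (X s)) φ (X s ω) (Y s ω) ≤ c * t := by
    refine setIntegral_Ioc_le_mul hc ht.1 fun s hs => ?_
    obtain ⟨hXs, hYs⟩ := hin s ⟨hs.1.le, hs.2⟩
    have hlocal : ∀ᶠ q in 𝓝 (X s ω, Y s ω), φ q.1 q.2 = ψ q.2 := by
      filter_upwards [(continuous_fst.norm.tendsto (X s ω, Y s ω)).eventually_lt_const hXs,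
        (continuous_snd.norm.tendsto (X s ω, Y s ω)).eventually_lt_const hYs] with q hx hy
      exact hφψ _ _ hx hy
    rw [genSF_eq_genFast C ε _ hlocal]
    exact hgen _ _ _ (hsol.lawP2X s hs.1.le)
  obtain ⟨hXt, hYt⟩ := hin t ⟨ht.1, le_rfl⟩
  have hcT : c * t ≤ c * T := mul_le_mul_of_nonneg_left ht.2 hc
  simp only [hφψ _ _ hXt hYt]
  linarith

theorem mul_measure_exit_le_of_bounded (hsol : IsSFSolution C ε P ℱ X Y ξ ζ)
    (hψ : ContDiff ℝ 2 ψ) (hψ0 : ∀ y, 0 ≤ ψ y) (hc : 0 ≤ c)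
    (hgen : ∀ x μ y, memP2 μ → genFast C ε x μ ψ y ≤ c) (hT : 0 ≤ T)
    (hl : ∀ y, r ≤ ‖y‖ → l ≤ ψ y) (R : ℝ) :
    ENNReal.ofReal l * P {ω | ‖Y 0 ω‖ < r ∧ (∃ t ∈ Set.Icc 0 T, r < ‖Y t ω‖) ∧
        ∀ t ∈ Set.Icc 0 T, ‖X t ω‖ ≤ R} ≤
      ∫⁻ ω in {ω | ‖Y 0 ω‖ < r}, ENNReal.ofReal (ψ (Y 0 ω) + c * T) ∂P := by
  set E := {ω | ‖Y 0 ω‖ < r ∧ (∃ t ∈ Set.Icc 0 T, r < ‖Y t ω‖) ∧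
    ∀ t ∈ Set.Icc 0 T, ‖X t ω‖ ≤ R}
  set w : ℝ → Ω → ℝ := fun t ω => max (‖X t ω‖ - (R + 1)) (‖Y t ω‖ - r) with hw
  set ρ := max (R + 2) (r + 1) + 1
  have hRρ : R + 3 ≤ ρ := by linarith [le_max_left (R + 2) (r + 1)]
  have hrρ : r + 2 ≤ ρ := by linarith [le_max_right (R + 2) (r + 1)]
  obtain ⟨M, hM, hM0, hMge⟩ := hsol.exists_martOn_ge hψ hc hgen T ρ
  have hwa : Adapted ℱ w := fun t =>
    ((measurable_norm.comp (hsol.adaptX t)).sub_const _).max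
      ((measurable_norm.comp (hsol.adaptY t)).sub_const _)
  have hwc : ∀ ω, Continuous fun t => w t ω := fun ω =>
    ((hsol.contX ω).norm.sub continuous_const).max ((hsol.contY ω).norm.sub continuous_const)
  have hstart : MeasurableSet {ω | w 0 ω < 0} := ℱ.le 0 _ (hwa 0 measurableSet_Iio)
  have hw0 : ∀ ω, w 0 ω < 0 → ‖X 0 ω‖ < R + 1 ∧ ‖Y 0 ω‖ < r := fun ω h0 => by
    simpa only [hw, max_lt_iff, sub_neg] using h0
  have hMeq : ∀ ω, w 0 ω < 0 → M 0 ω = ψ (Y 0 ω) + c * T := fun ω h0 =>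
    hM0 ω (by linarith [(hw0 ω h0).1]) (by linarith [(hw0 ω h0).2])
  have hψM : ∀ t ∈ Set.Icc 0 T, ∀ ω, (∀ s ∈ Set.Icc 0 t, w s ω ≤ 1) → ψ (Y t ω) ≤ M t ω := by
    intro t ht ω htame
    refine hMge t ht ω fun s hs => ?_
    obtain ⟨hX, hY⟩ := max_le_iff.1 (htame s hs)
    constructor <;> linarith
  have hmax : l * P.real E ≤ ∫ ω in {ω | w 0 ω < 0}, M 0 ω ∂P := by
    refine hM.mul_measureReal_le_setIntegral_zero hwa hwc hT (hsol.measurableSet_exit r T R)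
      (fun ω hω => ?_) (fun ω hω => ?_) (fun t ht ω h => (hψ0 _).trans (hψM t ht ω h))
      fun t ht ω hω htame hhit => (hl _ ?_).trans (hψM t ht ω htame)
    · exact max_lt (by linarith [hω.2.2 0 ⟨le_rfl, hT⟩]) (sub_neg.2 hω.1)
    · obtain ⟨t, ht, hrt⟩ := hω.2.1
      exact ⟨t, ht, lt_max_of_lt_right (sub_pos.2 hrt)⟩
    · rcases le_max_iff.1 hhit with h | h <;> linarith [hω.2.2 t ht]
  calc ENNReal.ofReal l * P E ≤ ∫⁻ ω in {ω | w 0 ω < 0}, ENNReal.ofReal (M 0 ω) ∂P :=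
        ofReal_mul_measure_le_setLIntegral (hM.1 0 le_rfl).2.integrableOn hstart
          (fun ω hω => (add_nonneg (hψ0 _) (mul_nonneg hc hT)).trans_eq (hMeq ω hω).symm) hmax
    _ = ∫⁻ ω in {ω | w 0 ω < 0}, ENNReal.ofReal (ψ (Y 0 ω) + c * T) ∂P :=
        setLIntegral_congr_fun hstart fun ω hω => by rw [hMeq ω hω]
    _ ≤ ∫⁻ ω in {ω | ‖Y 0 ω‖ < r}, ENNReal.ofReal (ψ (Y 0 ω) + c * T) ∂P :=
        lintegral_mono_set fun ω hω => (hw0 ω hω).2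

theorem mul_measure_exit_le (hsol : IsSFSolution C ε P ℱ X Y ξ ζ) (hψ : ContDiff ℝ 2 ψ)
    (hψ0 : ∀ y, 0 ≤ ψ y) (hc : 0 ≤ c) (hgen : ∀ x μ y, memP2 μ → genFast C ε x μ ψ y ≤ c)
    (hT : 0 ≤ T) (hl : ∀ y, r ≤ ‖y‖ → l ≤ ψ y) :
    ENNReal.ofReal l * P {ω | ‖Y 0 ω‖ < r ∧ ∃ t ∈ Set.Icc 0 T, r < ‖Y t ω‖} ≤
      ∫⁻ ω in {ω | ‖Y 0 ω‖ < r}, ENNReal.ofReal (ψ (Y 0 ω) + c * T) ∂P := by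
  set E : ℕ → Set Ω := fun N => {ω | ‖Y 0 ω‖ < r ∧ (∃ t ∈ Set.Icc 0 T, r < ‖Y t ω‖) ∧
    ∀ t ∈ Set.Icc 0 T, ‖X t ω‖ ≤ N}
  have hmono : Monotone E := fun N N' hNN' ω hω =>
    ⟨hω.1, hω.2.1, fun t ht => (hω.2.2 t ht).trans (Nat.cast_le.2 hNN')⟩
  have hsub : {ω | ‖Y 0 ω‖ < r ∧ ∃ t ∈ Set.Icc 0 T, r < ‖Y t ω‖} ⊆ ⋃ N, E N := by
    intro ω hω
    obtain ⟨B, hB⟩ := (isCompact_Icc (a := 0) (b := T)).bddAbove_image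
      (hsol.contX ω).norm.continuousOn
    obtain ⟨N, hN⟩ := exists_nat_ge B
    exact Set.mem_iUnion.2 ⟨N, hω.1, hω.2, fun t ht => (hB ⟨t, ht, rfl⟩).trans hN⟩
  calc ENNReal.ofReal l * P {ω | ‖Y 0 ω‖ < r ∧ ∃ t ∈ Set.Icc 0 T, r < ‖Y t ω‖}
      ≤ ENNReal.ofReal l * P (⋃ N, E N) := by gcongr
    _ = ⨆ N, ENNReal.ofReal l * P (E N) := by rw [hmono.measure_iUnion, ENNReal.mul_iSup]
    _ ≤ _ := iSup_le fun N => hsol.mul_measure_exit_le_of_bounded hψ hψ0 hc hgen hT hl N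

end IsSFSolution

/-! ### Suprema of paths and the layer cake formula -/

theorem biSup_Icc_le_iff {u : ℝ → ℝ} (hu : Continuous u) (hu0 : ∀ t, 0 ≤ u t) {T : ℝ}
    (hT : 0 ≤ T) {a : ℝ} : ⨆ t ∈ Set.Icc 0 T, u t ≤ a ↔ ∀ t ∈ Set.Icc 0 T, u t ≤ a := by
  constructor
  · intro hle t ht
    have hbdd : BddAbove (⋃ s, Set.range fun _ : s ∈ Set.Icc 0 T => u s) := by
      refine (isCompact_Icc (a := (0 : ℝ)) (b := T)).bddAbove_image hu.continuousOn |>.mono ?_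
      rintro _ ⟨_, ⟨s, rfl⟩, hs, rfl⟩
      exact ⟨s, hs, rfl⟩
    exact (le_ciSup₂ hbdd t ht).trans hle
  · intro hle
    have ha : 0 ≤ a := (hu0 0).trans (hle 0 ⟨le_rfl, hT⟩)
    exact Real.iSup_le (fun t => Real.iSup_le (hle t) ha) ha

theorem rpow_lt_biSup_Icc_rpow_iff {u : ℝ → ℝ} (hu : Continuous u) (hu0 : ∀ t, 0 ≤ u t) {T : ℝ}
    (hT : 0 ≤ T) {p r : ℝ} (hp : 0 < p) (hr : 0 ≤ r) :
    r ^ p < ⨆ t ∈ Set.Icc 0 T, u t ^ p ↔ ∃ t ∈ Set.Icc 0 T, r < u t := by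
  rw [← not_le, biSup_Icc_le_iff (hu.rpow_const fun _ => Or.inr hp.le)
    (fun t => Real.rpow_nonneg (hu0 t) p) hT]
  simp only [Real.rpow_le_rpow_iff (hu0 _) hr hp, not_forall, exists_prop, not_le]

theorem measurable_biSup_Icc {Ω : Type*} [MeasurableSpace Ω] {u : ℝ → Ω → ℝ}
    (hu : ∀ t, Measurable (u t)) (hc : ∀ ω, Continuous fun t => u t ω) (hu0 : ∀ t ω, 0 ≤ u t ω)
    {T : ℝ} (hT : 0 ≤ T) : Measurable fun ω => ⨆ t ∈ Set.Icc 0 T, u t ω := by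
  refine measurable_of_Iic fun a => ?_
  simp only [Set.preimage, Set.mem_Iic, biSup_Icc_le_iff (hc _) (hu0 · _) hT]
  exact measurableSet_forall_mem_le hc (fun t _ => hu t) a

theorem setLIntegral_Ioi_inv_sq {a : ℝ} (ha : 0 < a) :
    ∫⁻ r in Set.Ioi a, ENNReal.ofReal (r ^ 2)⁻¹ = ENNReal.ofReal a⁻¹ := by
  have hrpow : Set.EqOn (fun r : ℝ => (r ^ 2)⁻¹) (fun r => r ^ (-2 : ℝ)) (Set.Ioi a) :=
    fun r hr => by
      simp only
      rw [Real.rpow_neg (ha.trans hr).le, Real.rpow_two]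
  have hint : IntegrableOn (fun r : ℝ => (r ^ 2)⁻¹) (Set.Ioi a) :=
    (integrableOn_Ioi_rpow_of_lt (by norm_num) ha).congr_fun hrpow.symm measurableSet_Ioi
  rw [← ofReal_integral_eq_lintegral_ofReal hint (ae_of_all _ fun r => by positivity),
    setIntegral_congr_fun measurableSet_Ioi hrpow, integral_Ioi_rpow_of_lt (by norm_num) ha]
  norm_num [Real.rpow_neg_one]

section LayerCake

variable {Ω : Type*} [MeasurableSpace Ω] {P : Measure Ω} {S η : Ω → ℝ}

theorem lintegral_inv_sq_mul_setLIntegral [SFinite P] (hη : Measurable η) (hη0 : ∀ ω, 0 < η ω)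
    {F : Ω → ℝ≥0∞} (hF : Measurable F) :
    ∫⁻ r in Set.Ioi 0, ENNReal.ofReal (r ^ 2)⁻¹ * ∫⁻ ω in {ω | η ω < r}, F ω ∂P =
      ∫⁻ ω, ENNReal.ofReal (η ω)⁻¹ * F ω ∂P := by
  have hmeas : Measurable (Function.uncurry fun (r : ℝ) (ω : Ω) =>
      ENNReal.ofReal (r ^ 2)⁻¹ * {ω | η ω < r}.indicator F ω) :=
    Measurable.mul (by fun_prop) ((hF.comp measurable_snd).indicator
      (measurableSet_lt (hη.comp measurable_snd) measurable_fst))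
  calc ∫⁻ r in Set.Ioi 0, ENNReal.ofReal (r ^ 2)⁻¹ * ∫⁻ ω in {ω | η ω < r}, F ω ∂P
      = ∫⁻ r in Set.Ioi 0, ∫⁻ ω, ENNReal.ofReal (r ^ 2)⁻¹ * {ω | η ω < r}.indicator F ω ∂P := by
        refine lintegral_congr fun r => ?_
        rw [lintegral_const_mul' _ _ ENNReal.ofReal_ne_top,
          lintegral_indicator (measurableSet_lt hη measurable_const)]
    _ = ∫⁻ ω, (∫⁻ r in Set.Ioi 0, ENNReal.ofReal (r ^ 2)⁻¹ * {ω | η ω < r}.indicator F ω) ∂P :=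
        lintegral_lintegral_swap hmeas.aemeasurable
    _ = ∫⁻ ω, ENNReal.ofReal (η ω)⁻¹ * F ω ∂P := by
        refine lintegral_congr fun ω => ?_
        have hind : ∀ r, ENNReal.ofReal (r ^ 2)⁻¹ * {ω | η ω < r}.indicator F ω =
            (Set.Ioi (η ω)).indicator (fun r => ENNReal.ofReal (r ^ 2)⁻¹ * F ω) r := fun r => by
          by_cases hr : η ω < r <;> simp [hr]
        simp_rw [hind]
        rw [setLIntegral_indicator measurableSet_Ioi, Set.Ioi_inter_Ioi, sup_eq_left.2 (hη0 ω).le,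
          lintegral_mul_const _ (by fun_prop), setLIntegral_Ioi_inv_sq (hη0 ω)]

theorem measure_lt_le_of_sq_mul_measure_le (hη1 : ∀ ω, 1 ≤ η ω) {F : Ω → ℝ≥0∞}
    (htail : ∀ r > 1, ENNReal.ofReal (r ^ 2) * P {ω | η ω < r ∧ r < S ω} ≤
      ∫⁻ ω in {ω | η ω < r}, F ω ∂P) (r : ℝ) :
    P {ω | r < S ω} ≤
      P {ω | r ≤ η ω} + ENNReal.ofReal (r ^ 2)⁻¹ * ∫⁻ ω in {ω | η ω < r}, F ω ∂P := by
  have hsplit : {ω | r < S ω} ⊆ {ω | r ≤ η ω} ∪ {ω | η ω < r ∧ r < S ω} := fun ω hω =>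
    (le_or_gt r (η ω)).imp id fun h => ⟨h, hω⟩
  refine (measure_mono hsplit).trans ((measure_union_le _ _).trans (add_le_add_right ?_ _))
  rcases le_or_gt r 1 with hr1 | hr1
  · have hempty : {ω | η ω < r ∧ r < S ω} = ∅ :=
      Set.eq_empty_of_forall_notMem fun ω hω => (hω.1.trans_le hr1).not_ge (hη1 ω)
    simp only [hempty, measure_empty, zero_le]
  · have hr2 : 0 < r ^ 2 := pow_pos (one_pos.trans hr1) 2
    rw [ENNReal.ofReal_inv_of_pos hr2, ← ENNReal.div_eq_inv_mul,
      ENNReal.le_div_iff_mul_le (Or.inl (ENNReal.ofReal_pos.2 hr2).ne')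
        (Or.inl ENNReal.ofReal_ne_top), mul_comm]
    exact htail r hr1

theorem ofReal_inv_mul_mul_sq_add_le {a : ℝ} (ha : 1 ≤ a) (A b : ℝ≥0∞) :
    ENNReal.ofReal a⁻¹ * (A * ENNReal.ofReal a ^ 2 + b) ≤ A * ENNReal.ofReal a + b := by
  have ha0 : 0 < a := one_pos.trans_le ha
  calc ENNReal.ofReal a⁻¹ * (A * ENNReal.ofReal a ^ 2 + b)
      = A * ENNReal.ofReal a * ((ENNReal.ofReal a)⁻¹ * ENNReal.ofReal a) +
          (ENNReal.ofReal a)⁻¹ * b := by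
        rw [ENNReal.ofReal_inv_of_pos ha0]
        ring
    _ ≤ A * ENNReal.ofReal a + b := by
        rw [ENNReal.inv_mul_cancel (ENNReal.ofReal_pos.2 ha0).ne' ENNReal.ofReal_ne_top, mul_one]
        gcongr
        exact mul_le_of_le_one_left' (ENNReal.inv_le_one.2 (ENNReal.one_le_ofReal.2 ha))

theorem lintegral_ofReal_le_of_sq_mul_measure_le [SFinite P] (hS : Measurable S)
    (hS0 : ∀ ω, 0 ≤ S ω) (hη : Measurable η) (hη1 : ∀ ω, 1 ≤ η ω) {A b : ℝ≥0∞}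
    (htail : ∀ r > 1, ENNReal.ofReal (r ^ 2) * P {ω | η ω < r ∧ r < S ω} ≤
      ∫⁻ ω in {ω | η ω < r}, (A * ENNReal.ofReal (η ω) ^ 2 + b) ∂P) :
    ∫⁻ ω, ENNReal.ofReal (S ω) ∂P ≤
      (1 + A) * ∫⁻ ω, ENNReal.ofReal (η ω) ∂P + b * P Set.univ := by
  have hη0 : ∀ ω, 0 < η ω := fun ω => one_pos.trans_le (hη1 ω)
  have hanti : Antitone fun r => P {ω | r ≤ η ω} := fun r s hrs =>
    measure_mono fun ω hω => hrs.trans hω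
  calc ∫⁻ ω, ENNReal.ofReal (S ω) ∂P
      = ∫⁻ r in Set.Ioi 0, P {ω | r < S ω} :=
        lintegral_eq_lintegral_meas_lt P (ae_of_all _ hS0) hS.aemeasurable
    _ ≤ ∫⁻ r in Set.Ioi 0, (P {ω | r ≤ η ω} + ENNReal.ofReal (r ^ 2)⁻¹ *
          ∫⁻ ω in {ω | η ω < r}, (A * ENNReal.ofReal (η ω) ^ 2 + b) ∂P) :=
        lintegral_mono fun r => measure_lt_le_of_sq_mul_measure_le hη1 htail r
    _ = ∫⁻ ω, ENNReal.ofReal (η ω) ∂P +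
          ∫⁻ ω, ENNReal.ofReal (η ω)⁻¹ * (A * ENNReal.ofReal (η ω) ^ 2 + b) ∂P := by
        rw [lintegral_add_left hanti.measurable, ← lintegral_eq_lintegral_meas_le P
            (ae_of_all _ fun ω => (hη0 ω).le) hη.aemeasurable,
          lintegral_inv_sq_mul_setLIntegral hη hη0 (by fun_prop)]
    _ ≤ ∫⁻ ω, ENNReal.ofReal (η ω) ∂P + ∫⁻ ω, (A * ENNReal.ofReal (η ω) + b) ∂P := by
        gcongr with ω
        exact ofReal_inv_mul_mul_sq_add_le (hη1 ω) A b
    _ = (1 + A) * ∫⁻ ω, ENNReal.ofReal (η ω) ∂P + b * P Set.univ := by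
        rw [lintegral_add_right _ measurable_const, lintegral_const,
          lintegral_const_mul _ (by fun_prop)]
        ring

end LayerCake

/-! ### The moment estimate -/

namespace IsSFSolution

variable {n m d : ℕ} {C : Coeffs n m d} {ε : ℝ} {Ω : Type} [mΩ : MeasurableSpace Ω]
  {P : Measure Ω} {ℱ : Filtration ℝ mΩ} {X : ℝ → Ω → Vec n} {Y : ℝ → Ω → Vec m} {ξ : Ω → Vec n}
  {ζ : Ω → Vec m} {p c T : ℝ}

theorem sq_mul_measure_lt_biSup_rpow_le [IsFiniteMeasure P]
    (hsol : IsSFSolution C ε P ℱ X Y ξ ζ) (hp : 0 < p) (hc : 0 ≤ c)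
    (hgen : ∀ x μ y, memP2 μ → genFast C ε x μ (lyapunov p) y ≤ c) (hT : 0 ≤ T) {s : ℝ}
    (hs : 1 < s) :
    ENNReal.ofReal (s ^ 2) *
        P {ω | max 1 (‖Y 0 ω‖ ^ p) < s ∧ s < ⨆ t ∈ Set.Icc 0 T, ‖Y t ω‖ ^ p} ≤
      ∫⁻ ω in {ω | max 1 (‖Y 0 ω‖ ^ p) < s},
        (ENNReal.ofReal (2 ^ p) * ENNReal.ofReal (max 1 (‖Y 0 ω‖ ^ p)) ^ 2 +
          ENNReal.ofReal (c * T)) ∂P := by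
  have hs0 : 0 ≤ s := (one_pos.trans hs).le
  obtain ⟨r, hr, rfl⟩ : ∃ r, 0 ≤ r ∧ r ^ p = s :=
    ⟨s ^ p⁻¹, Real.rpow_nonneg hs0 _, Real.rpow_inv_rpow hs0 hp.ne'⟩
  have hstart : ∀ ω, max 1 (‖Y 0 ω‖ ^ p) < r ^ p ↔ ‖Y 0 ω‖ < r := fun ω => by
    rw [max_lt_iff, and_iff_right hs, Real.rpow_lt_rpow_iff (norm_nonneg _) hr hp]
  simp only [hstart, rpow_lt_biSup_Icc_rpow_iff (hsol.contY _).norm (fun _ => norm_nonneg _) hT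
    hp hr]
  refine (hsol.mul_measure_exit_le (contDiff_lyapunov p) (fun y => (lyapunov_pos p y).le) hc
    hgen hT fun y => rpow_sq_le_lyapunov hp.le hr).trans (lintegral_mono fun ω => ?_)
  rw [← ENNReal.ofReal_pow (by positivity), ← ENNReal.ofReal_mul (by positivity),
    ← ENNReal.ofReal_add (by positivity) (by positivity)]
  gcongr
  exact lyapunov_le hp.le _

theorem measurable_biSup_rpow (hsol : IsSFSolution C ε P ℱ X Y ξ ζ) (hp : 0 ≤ p) (hT : 0 ≤ T) :
    Measurable fun ω => ⨆ t ∈ Set.Icc 0 T, ‖Y t ω‖ ^ p :=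
  measurable_biSup_Icc (fun t => (hsol.measY t).norm.pow_const p)
    (fun ω => (hsol.contY ω).norm.rpow_const fun _ => Or.inr hp)
    (fun _ _ => Real.rpow_nonneg (norm_nonneg _) p) hT

theorem lintegral_biSup_rpow_le [IsProbabilityMeasure P] (hsol : IsSFSolution C ε P ℱ X Y ξ ζ)
    (hp : 0 < p) (hc : 0 ≤ c)
    (hgen : ∀ x μ y, memP2 μ → genFast C ε x μ (lyapunov p) y ≤ c) (hT : 0 ≤ T) :
    ∫⁻ ω, ENNReal.ofReal (⨆ t ∈ Set.Icc 0 T, ‖Y t ω‖ ^ p) ∂P ≤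
      (1 + ENNReal.ofReal (2 ^ p)) * ∫⁻ ω, ENNReal.ofReal (max 1 (‖Y 0 ω‖ ^ p)) ∂P +
        ENNReal.ofReal (c * T) := by
  have hmeas : ∀ t, Measurable fun ω => ‖Y t ω‖ ^ p := fun t => (hsol.measY t).norm.pow_const p
  simpa only [measure_univ, mul_one] using lintegral_ofReal_le_of_sq_mul_measure_le
    (hsol.measurable_biSup_rpow hp.le hT)
    (fun ω => Real.iSup_nonneg fun t => Real.iSup_nonneg fun _ => by positivity)
    (measurable_const.max (hmeas 0)) (fun ω => le_max_left _ _)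
    fun s hs => hsol.sq_mul_measure_lt_biSup_rpow_le hp hc hgen hT hs

theorem lintegral_max_one_rpow_le [IsProbabilityMeasure P] (hsol : IsSFSolution C ε P ℱ X Y ξ ζ)
    (hp : 0 ≤ p) (hmom : ∫⁻ ω, (‖ζ ω‖₊ : ℝ≥0∞) ^ p ∂P < ⊤) :
    ∫⁻ ω, ENNReal.ofReal (max 1 (‖Y 0 ω‖ ^ p)) ∂P ≤
      ENNReal.ofReal (1 + ∫ ω, ‖ζ ω‖ ^ p ∂P) := by
  have hnonneg : ∀ ω, 0 ≤ ‖ζ ω‖ ^ p := fun ω => Real.rpow_nonneg (norm_nonneg _) p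
  have hζ : AEMeasurable ζ P := (hsol.measY 0).aemeasurable.congr hsol.initY
  have hnnnorm : ∀ ω, ENNReal.ofReal (‖ζ ω‖ ^ p) = (‖ζ ω‖₊ : ℝ≥0∞) ^ p := fun ω => by
    rw [← ENNReal.ofReal_rpow_of_nonneg (norm_nonneg _) hp, ofReal_norm]
    rfl
  have hint : Integrable (fun ω => ‖ζ ω‖ ^ p) P := by
    refine (lintegral_ofReal_ne_top_iff_integrable
      (hζ.norm.pow_const p).aestronglyMeasurable (ae_of_all _ hnonneg)).1 ?_
    simpa only [hnnnorm] using hmom.ne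
  calc ∫⁻ ω, ENNReal.ofReal (max 1 (‖Y 0 ω‖ ^ p)) ∂P
      ≤ ∫⁻ ω, ENNReal.ofReal (1 + ‖ζ ω‖ ^ p) ∂P := by
        refine lintegral_mono_ae ?_
        filter_upwards [hsol.initY] with ω hω
        rw [hω]
        exact ENNReal.ofReal_le_ofReal (max_le_add_of_nonneg zero_le_one (hnonneg ω))
    _ = ENNReal.ofReal (1 + ∫ ω, ‖ζ ω‖ ^ p ∂P) := by
        have hint_add : Integrable (fun ω => 1 + ‖ζ ω‖ ^ p) P := (integrable_const 1).add hint
        rw [← ofReal_integral_eq_lintegral_ofReal hint_add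
            (ae_of_all _ fun ω => add_nonneg zero_le_one (hnonneg ω)),
          integral_add (integrable_const 1) hint, integral_const, probReal_univ, one_smul]

theorem integrable_biSup_rpow_and_integral_le [IsProbabilityMeasure P]
    (hsol : IsSFSolution C ε P ℱ X Y ξ ζ) (hp : 0 < p) (hc : 0 ≤ c)
    (hgen : ∀ x μ y, memP2 μ → genFast C ε x μ (lyapunov p) y ≤ c) (hT : 0 ≤ T)
    (hmom : ∫⁻ ω, (‖ζ ω‖₊ : ℝ≥0∞) ^ p ∂P < ⊤) :
    Integrable (fun ω => ⨆ t ∈ Set.Icc 0 T, ‖Y t ω‖ ^ p) P ∧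
      ∫ ω, (⨆ t ∈ Set.Icc 0 T, ‖Y t ω‖ ^ p) ∂P ≤
        (1 + 2 ^ p) * (1 + ∫ ω, ‖ζ ω‖ ^ p ∂P) + c * T := by
  have hsup0 : ∀ ω, 0 ≤ ⨆ t ∈ Set.Icc 0 T, ‖Y t ω‖ ^ p := fun ω =>
    Real.iSup_nonneg fun t => Real.iSup_nonneg fun _ => Real.rpow_nonneg (norm_nonneg _) p
  have hle : ∫⁻ ω, ENNReal.ofReal (⨆ t ∈ Set.Icc 0 T, ‖Y t ω‖ ^ p) ∂P ≤
      ENNReal.ofReal ((1 + 2 ^ p) * (1 + ∫ ω, ‖ζ ω‖ ^ p ∂P) + c * T) := by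
    rw [ENNReal.ofReal_add (by positivity) (by positivity), ENNReal.ofReal_mul (by positivity),
      ENNReal.ofReal_add zero_le_one (by positivity), ENNReal.ofReal_one]
    refine (hsol.lintegral_biSup_rpow_le hp hc hgen hT).trans ?_
    gcongr
    exact hsol.lintegral_max_one_rpow_le hp.le hmom
  have hint : Integrable (fun ω => ⨆ t ∈ Set.Icc 0 T, ‖Y t ω‖ ^ p) P :=
    (lintegral_ofReal_ne_top_iff_integrable
      (hsol.measurable_biSup_rpow hp.le hT).aestronglyMeasurable (ae_of_all _ hsup0)).1
      (hle.trans_lt ENNReal.ofReal_lt_top).ne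
  refine ⟨hint, (ENNReal.ofReal_le_ofReal_iff (by positivity)).1 ?_⟩
  rwa [ofReal_integral_eq_lintegral_ofReal hint (ae_of_all _ hsup0)]

end IsSFSolution

theorem sup_moment_estimate_fast_general {n m d : ℕ} (C : Coeffs n m d) {γ ς G : ℝ}
    (hC : FastDissipative C γ ς G) {p : ℝ} (hp : 0 < p) :
    ∃ Cp > (0 : ℝ), ∃ ε₀ ∈ Set.Ioc (0 : ℝ) 1, ∀ ε ∈ Set.Ioo 0 ε₀,
      ∀ {Ω : Type} [mΩ : MeasurableSpace Ω] (P : Measure Ω) [IsProbabilityMeasure P]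
        (ℱ : Filtration ℝ mΩ) (X : ℝ → Ω → Vec n) (Y : ℝ → Ω → Vec m) (ξ : Ω → Vec n)
        (ζ : Ω → Vec m), IsSFSolution C ε P ℱ X Y ξ ζ →
      ∫⁻ ω, (‖ζ ω‖₊ : ℝ≥0∞) ^ p ∂P < ⊤ → ∀ T, ε ≤ T →
        Integrable (fun ω => ⨆ t ∈ Set.Icc 0 T, ‖Y t ω‖ ^ p) P ∧
          ∫ ω, (⨆ t ∈ Set.Icc 0 T, ‖Y t ω‖ ^ p) ∂P ≤
            Cp * (1 + ∫ ω, ‖ζ ω‖ ^ p ∂P) * T / ε := by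
  obtain ⟨c, hc, hgen⟩ := hC.exists_genFast_lyapunov_le hp
  have hG := hC.G_pos
  have hγ := hC.γ_pos
  refine ⟨1 + 2 ^ p + c, by positivity, min 1 ((γ / (2 * G)) ^ 2),
    ⟨lt_min one_pos (by positivity), min_le_left _ _⟩, ?_⟩
  intro ε hε Ω _ P _ ℱ X Y ξ ζ hsol hmom T hT
  have hε0 : 0 < ε := hε.1
  have hsqrt : √ε * G ≤ γ / 2 := by
    have hle : √ε ≤ γ / (2 * G) :=
      Real.sqrt_le_iff.2 ⟨by positivity, (hε.2.trans_le (min_le_right _ _)).le⟩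
    rwa [le_div_iff₀ (by positivity), ← mul_assoc, mul_right_comm, ← le_div_iff₀ two_pos] at hle
  obtain ⟨hint, hle⟩ := hsol.integrable_biSup_rpow_and_integral_le hp (by positivity)
    (hgen ε hε0 hsqrt) (hε0.le.trans hT) hmom
  have hI : 0 ≤ ∫ ω, ‖ζ ω‖ ^ p ∂P := integral_nonneg fun ω => Real.rpow_nonneg (norm_nonneg _) p
  have hTε : 1 ≤ T / ε := (one_le_div hε0).2 hT
  refine ⟨hint, hle.trans ?_⟩
  calc (1 + 2 ^ p) * (1 + ∫ ω, ‖ζ ω‖ ^ p ∂P) + c / ε * T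
      = (1 + 2 ^ p) * (1 + ∫ ω, ‖ζ ω‖ ^ p ∂P) * 1 + c * 1 * (T / ε) := by ring
    _ ≤ (1 + 2 ^ p) * (1 + ∫ ω, ‖ζ ω‖ ^ p ∂P) * (T / ε) +
          c * (1 + ∫ ω, ‖ζ ω‖ ^ p ∂P) * (T / ε) := by
        gcongr
        linarith
    _ = (1 + 2 ^ p + c) * (1 + ∫ ω, ‖ζ ω‖ ^ p ∂P) * T / ε := by ring

/-- **Estimate (3.12).** Under conditions A1–A3, for any `p ≥ 2` there is `C_p > 0` such
that for all `T ≥ 1` and sufficiently small `ε > 0`,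
`E[sup_{t∈[0,T]} |Y^ε_t|ᵖ] ≤ C_p (1 + E|ζ|ᵖ) T ε^{-1}`. -/
theorem sup_moment_estimate_fast {n m d : ℕ} (C : Coeffs n m d) (SAh : SA13 C)
    {Ω : Type} [mΩ : MeasurableSpace Ω] (P : Measure Ω) (hP : IsProbabilityMeasure P)
    (ℱ : Filtration ℝ mΩ) (X : ℝ → ℝ → Ω → Vec n) (Y : ℝ → ℝ → Ω → Vec m)
    (ξ : Ω → Vec n) (ζ : Ω → Vec m)
    (hsol : ∀ ε ∈ Set.Ioo (0 : ℝ) 1, IsSFSolution C ε P ℱ (X ε) (Y ε) ξ ζ)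
    (p : ℝ) (hp : 2 ≤ p) (hmom : (∫⁻ ω, (‖ζ ω‖₊ : ℝ≥0∞) ^ p ∂P) < ⊤) :
    ∃ Cp > (0 : ℝ), ∃ ε₀ ∈ Set.Ioc (0 : ℝ) 1, ∀ T : ℝ, 1 ≤ T →
      ∀ ε ∈ Set.Ioo (0 : ℝ) ε₀,
        ∫ ω, (⨆ t ∈ Set.Icc (0 : ℝ) T, ‖Y ε t ω‖ ^ p) ∂P ≤
          Cp * (1 + ∫ ω, ‖ζ ω‖ ^ p ∂P) * T / ε := by
  obtain ⟨Cp, hCp, ε₀, hε₀, hbound⟩ :=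
    sup_moment_estimate_fast_general C SAh.fastDissipative (two_pos.trans_le hp)
  refine ⟨Cp, hCp, ε₀, hε₀, fun T hT ε hε => ?_⟩
  have hε1 : ε < 1 := hε.2.trans_le hε₀.2
  exact (hbound ε hε P ℱ (X ε) (Y ε) ξ ζ (hsol ε ⟨hε.1, hε1⟩) hmom T (hε1.le.trans hT)).2

end DiffApprox
end
end

section
/- Assume the coefficients f,g satisfy the dissipativity and growth conditions A1–A2. Then there exist β ∈ (0,γ) and C > 0 such that for all y ∈ R^m and t ≥ 0, sup_{x∈R^n, μ∈P_2(R^n)} E|Y_t^{x,μ,y}|^6 ≤ e^{−βt}|y|^6 + C, and sup_{x∈R^n, μ∈P_2(R^n)} ∫_{R^m} |y|^6 ν^{x,μ}(dy) < ∞. -/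
open MeasureTheory Filter
open scoped ENNReal NNReal Topology RealInnerProductSpace

set_option maxSynthPendingDepth 3

noncomputable section

namespace DiffApprox

/-!
Fix `x, μ`, write `L` for the generator of the frozen equation and `V y = ‖y‖ ^ (2 * p)`, so that
`p = 3` is the sixth moment. Dissipativity makes the drift contribute `-p γ V` to `L V`, while the
drift at the origin and the sublinearly growing dispersion only contribute terms of lower order than
`V`. Hence `L V ≤ C - β V` for every `β < p γ`, with `C` depending on the coefficients through
`γ`, `ς` and the growth constant alone, which is where uniformity in `x, μ` comes from.

The martingale problem only admits compactly supported test functions, so `V = h (‖y‖ ^ 2)` is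
replaced by `φₖ = hₖ (‖y‖ ^ 2)` with `hₖ' = χₖ h'` for a nonincreasing cutoff `χₖ`. Cutting off the
derivative rather than `V` itself leaves no error term of the wrong sign: `χₖ' ≤ 0`, and the drift
condition survives as `L φₖ ≤ C - β χₖ V`. Since `χₖ V ≤ φₖ + cₖ ≤ V` for a constant `cₖ`, Fatou's
lemma lets `k → ∞` both in the martingale identity, which becomes
`E V (Y t) + β ∫ E V (Y r) dr ≤ E V (Y s) + C (t - s)`, and in the invariance `∫ L φₖ dν = 0`.
Grönwall's inequality turns the former into exponential decay.
-/

theorem exp_mul_le_of_add_integral_le {w : ℝ → ℝ} {β t : ℝ} (hβ : 0 ≤ β) (ht : 0 ≤ t)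
    (hw : IntervalIntegrable w volume 0 t)
    (h : ∀ s ∈ Set.Icc 0 t, w t + β * ∫ r in s..t, w r ≤ w s) :
    Real.exp (β * t) * w t ≤ w 0 := by
  -- As `w` is only integrable, `g` is absolutely continuous and the product rule for
  -- `s ↦ exp (β * s) * g s` holds almost everywhere.
  set g : ℝ → ℝ := fun s => w t + β * ∫ r in s..t, w r
  have hg_eq : g = fun s => w t - β * ∫ r in t..s, w r := by
    ext s; simp only [g, intervalIntegral.integral_symm s t]; ring
  have hexp : AbsolutelyContinuousOnInterval (fun s => Real.exp (β * s)) 0 t :=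
    (by fun_prop : ContDiff ℝ 1 fun s => Real.exp (β * s)).contDiffOn.absolutelyContinuousOnInterval
  have hg : AbsolutelyContinuousOnInterval g 0 t := by
    rw [hg_eq]
    exact (contDiff_const.contDiffOn.absolutelyContinuousOnInterval).sub
      ((hw.absolutelyContinuousOnInterval_intervalIntegral (by simp)).const_mul β)
  have hderiv : ∀ᵐ s, s ∈ Set.uIcc 0 t → deriv g s = -(β * w s) := by
    filter_upwards [hw.ae_hasDerivAt_integral] with s hs hst
    rw [hg_eq]
    exact (((hs hst t (by simp)).const_mul β).const_sub (w t)).deriv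
  have hnonpos : ∫ s in (0 : ℝ)..t,
      (deriv (fun s => Real.exp (β * s)) s * g s + Real.exp (β * s) * deriv g s) ≤ 0 := by
    rw [intervalIntegral.integral_of_le ht]
    refine setIntegral_nonpos_of_ae_restrict ?_
    rw [EventuallyLE, ae_restrict_iff' measurableSet_Ioc]
    filter_upwards [hderiv] with s hs hst
    have hmem : s ∈ Set.Icc 0 t := ⟨hst.1.le, hst.2⟩
    have hexp_deriv : deriv (fun s => Real.exp (β * s)) s = β * Real.exp (β * s) := by
      simpa [mul_comm] using ((hasDerivAt_id s).const_mul β).exp.deriv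
    rw [hs (Set.uIcc_of_le ht ▸ hmem), hexp_deriv]
    calc β * Real.exp (β * s) * g s + Real.exp (β * s) * -(β * w s)
        = β * Real.exp (β * s) * (g s - w s) := by ring
      _ ≤ 0 := mul_nonpos_of_nonneg_of_nonpos (by positivity) (sub_nonpos.2 (h s hmem))
  rw [hexp.integral_deriv_mul_eq_sub hg] at hnonpos
  have hgt : g t = w t := by simp [g]
  have hg0 : g 0 ≤ w 0 := h 0 ⟨le_rfl, ht⟩
  simp only [hgt, mul_zero, Real.exp_zero, one_mul] at hnonpos
  linarith

theorem le_exp_neg_mul_add_of_add_integral_le {u : ℝ → ℝ} {β C t : ℝ} (hβ : 0 < β) (hC : 0 ≤ C)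
    (ht : 0 ≤ t) (hu : IntervalIntegrable u volume 0 t)
    (h : ∀ s ∈ Set.Icc 0 t, u t + β * ∫ r in s..t, u r ≤ u s + C * (t - s)) :
    u t ≤ Real.exp (-(β * t)) * u 0 + C / β := by
  have hint : ∀ s ∈ Set.Icc 0 t,
      ∫ r in s..t, (u r - C / β) = (∫ r in s..t, u r) - C / β * (t - s) := by
    intro s hs
    rw [intervalIntegral.integral_sub (hu.mono_set ?_) intervalIntegrable_const,
      intervalIntegral.integral_const, smul_eq_mul, mul_comm]
    rw [Set.uIcc_of_le hs.2, Set.uIcc_of_le ht]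
    exact Set.Icc_subset_Icc_left hs.1
  have hdecay : Real.exp (β * t) * (u t - C / β) ≤ u 0 - C / β := by
    refine exp_mul_le_of_add_integral_le hβ.le ht (hu.sub intervalIntegrable_const) fun s hs => ?_
    rw [hint s hs, mul_sub, ← mul_assoc, mul_div_cancel₀ C hβ.ne']
    linarith [h s hs]
  have hCβ : 0 ≤ Real.exp (-(β * t)) * (C / β) := by positivity
  calc u t = Real.exp (-(β * t)) * (Real.exp (β * t) * (u t - C / β)) + C / β := by
        rw [← mul_assoc, ← Real.exp_add, neg_add_cancel, Real.exp_zero]; ring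
    _ ≤ Real.exp (-(β * t)) * (u 0 - C / β) + C / β := by gcongr
    _ ≤ Real.exp (-(β * t)) * u 0 + C / β := by linarith

theorem exists_forall_le_add_mul_of_isLittleO {f h : ℝ → ℝ} {ε : ℝ}
    (hf : ContinuousOn f (Set.Ici 0)) (hfh : f =o[atTop] h) (hh : ∀ r, 0 ≤ r → 0 ≤ h r)
    (hε : 0 < ε) : ∃ C, ∀ r, 0 ≤ r → f r ≤ C + ε * h r := by
  obtain ⟨R, hR⟩ := eventually_atTop.1 (hfh.def hε)
  obtain ⟨C, hC⟩ := (isCompact_Icc (a := 0) (b := R)).bddAbove_image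
    (hf.mono Set.Icc_subset_Ici_self)
  refine ⟨max C 0, fun r hr => ?_⟩
  rcases le_total r R with hrR | hRr
  · have hCr : f r ≤ C := hC (Set.mem_image_of_mem f ⟨hr, hrR⟩)
    linarith [le_max_left C 0, mul_nonneg hε.le (hh r hr)]
  · have hεr : f r ≤ ε * h r := by
      simpa [abs_of_nonneg (hh r hr)] using (le_abs_self _).trans (hR r hRr)
    linarith [le_max_right C 0]

theorem integrable_and_integral_le_of_tendsto {α : Type*} [MeasurableSpace α] {μ : Measure α}
    {F : ℕ → α → ℝ} {f : α → ℝ} {K : ℝ} (hF : ∀ k, Integrable (F k) μ) (hF0 : ∀ k a, 0 ≤ F k a)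
    (hlim : ∀ a, Tendsto (fun k => F k a) atTop (𝓝 (f a))) (hK : ∀ k, ∫ a, F k a ∂μ ≤ K) :
    Integrable f μ ∧ ∫ a, f a ∂μ ≤ K := by
  have hf0 : ∀ a, 0 ≤ f a := fun a => ge_of_tendsto' (hlim a) (hF0 · a)
  have hfm : AEStronglyMeasurable f μ :=
    aestronglyMeasurable_of_tendsto_ae atTop (fun k => (hF k).1) (ae_of_all _ hlim)
  have hfatou : ∫⁻ a, ENNReal.ofReal (f a) ∂μ ≤ ENNReal.ofReal K :=
    calc ∫⁻ a, ENNReal.ofReal (f a) ∂μ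
        = ∫⁻ a, liminf (fun k => ENNReal.ofReal (F k a)) atTop ∂μ :=
          lintegral_congr fun a => (ENNReal.tendsto_ofReal (hlim a)).liminf_eq.symm
      _ ≤ liminf (fun k => ∫⁻ a, ENNReal.ofReal (F k a) ∂μ) atTop :=
          lintegral_liminf_le' fun k => (hF k).1.aemeasurable.ennreal_ofReal
      _ ≤ ENNReal.ofReal K := liminf_le_of_frequently_le' <| .of_forall fun k => by
          rw [← ofReal_integral_eq_lintegral_ofReal (hF k) (ae_of_all _ (hF0 k))]
          exact ENNReal.ofReal_le_ofReal (hK k)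
  have hK0 : 0 ≤ K := (integral_nonneg (hF0 0)).trans (hK 0)
  refine ⟨(lintegral_ofReal_ne_top_iff_integrable hfm (ae_of_all _ hf0)).1
    (ne_top_of_le_ne_top ENNReal.ofReal_ne_top hfatou), ?_⟩
  rw [integral_eq_lintegral_of_nonneg_ae (ae_of_all _ hf0) hfm]
  exact ENNReal.toReal_le_of_le_ofReal hK0 hfatou

section Generator

variable {m d : ℕ}

/-- The generator `φ ↦ b · ∇φ + ½ tr(σσᵀ ∇²φ)` of the diffusion with drift `b` and dispersion `σ`;
`genFrozen` is the case `b = f x μ`, `σ = g x μ`. -/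
def generator (b : Vec m → Vec m) (σ : Vec m → Mat m d) (φ : Vec m → ℝ) (y : Vec m) : ℝ :=
  ⟪b y, gradient φ y⟫ + (1 / 2) * trCLM (((σ y).comp (adj (σ y))).comp (hess φ y))

variable {b : Vec m → Vec m} {σ : Vec m → Mat m d} {φ : Vec m → ℝ}

theorem continuous_trCLM : Continuous (trCLM : (Vec m →L[ℝ] Vec m) → ℝ) :=
  ((LinearMap.trace ℝ (Vec m)).comp
    (ContinuousLinearMap.coeLM ℝ : (Vec m →L[ℝ] Vec m) →ₗ[ℝ] _)).continuous_of_finiteDimensional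

theorem contDiff_gradient (hφ : ContDiff ℝ 2 φ) : ContDiff ℝ 1 (gradient φ) :=
  (InnerProductSpace.toDual ℝ (Vec m)).symm.toContinuousLinearEquiv.contDiff.comp
    (hφ.fderiv_right (by norm_num))

theorem continuous_generator (hb : Continuous b) (hσ : Continuous σ) (hφ : ContDiff ℝ 2 φ) :
    Continuous (generator b σ φ) := by
  have hgrad := contDiff_gradient hφ
  have hadj : Continuous fun y => adj (σ y) :=
    (ContinuousLinearMap.adjoint : Mat m d ≃ₗᵢ⋆[ℝ] Mat d m).continuous.comp hσ
  have hhess : Continuous (hess φ) := hgrad.continuous_fderiv (by norm_num)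
  exact (hb.inner hgrad.continuous).add
    (continuous_const.mul (continuous_trCLM.comp ((hσ.clm_comp hadj).clm_comp hhess)))

theorem hasCompactSupport_generator (b : Vec m → Vec m) (σ : Vec m → Mat m d)
    (hφ : HasCompactSupport φ) : HasCompactSupport (generator b σ φ) := by
  have hgrad : HasCompactSupport (gradient φ) :=
    (hφ.fderiv ℝ).comp_left (map_zero (InnerProductSpace.toDual ℝ (Vec m)).symm)
  have hhess : HasCompactSupport (hess φ) := hgrad.fderiv ℝ
  refine HasCompactSupport.intro (hgrad.isCompact.union hhess.isCompact) fun y hy => ?_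
  rw [Set.mem_union, not_or] at hy
  simp [generator, image_eq_zero_of_notMem_tsupport hy.1, image_eq_zero_of_notMem_tsupport hy.2,
    trCLM]

theorem trCLM_comp_outer (A : Mat m m) (y : Vec m) : trCLM (A.comp (outer y y)) = ⟪y, A y⟫ := by
  have hrank_one :
      (A.comp (outer y y)).toLinearMap = (innerSL ℝ y).toLinearMap.smulRight (A y) := by
    ext v
    simp [outer]
  rw [trCLM, hrank_one, LinearMap.trace_smulRight]
  simp

theorem inner_comp_adj_self (G : Mat m d) (y : Vec m) : ⟪y, G.comp (adj G) y⟫ = ‖adj G y‖ ^ 2 := by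
  rw [← real_inner_self_eq_norm_sq, adj, ContinuousLinearMap.adjoint_inner_left]
  rfl

theorem norm_adj (G : Mat m d) : ‖adj G‖ = ‖G‖ :=
  (ContinuousLinearMap.adjoint : Mat m d ≃ₗᵢ⋆[ℝ] Mat d m).norm_map G

theorem norm_adj_apply_sq_le (G : Mat m d) (y : Vec m) : ‖adj G y‖ ^ 2 ≤ ‖G‖ ^ 2 * ‖y‖ ^ 2 := by
  rw [← mul_pow, ← norm_adj]
  gcongr
  exact (adj G).le_opNorm y

theorem trCLM_comp_adj_le (G : Mat m d) : trCLM (G.comp (adj G)) ≤ m * ‖G‖ ^ 2 := by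
  set e := EuclideanSpace.basisFun (Fin m) ℝ
  calc trCLM (G.comp (adj G)) = ∑ i, ‖adj G (e i)‖ ^ 2 := by
        rw [trCLM, LinearMap.trace_eq_sum_inner _ e]
        exact Finset.sum_congr rfl fun i _ => inner_comp_adj_self G (e i)
    _ ≤ ∑ _i : Fin m, ‖G‖ ^ 2 := Finset.sum_le_sum fun i _ => by
        simpa using norm_adj_apply_sq_le G (e i)
    _ = m * ‖G‖ ^ 2 := by simp

end Generator

section Radial

variable {m d : ℕ} {h : ℝ → ℝ}

theorem gradient_comp_norm_sq (hh : Differentiable ℝ h) :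
    gradient (fun z : Vec m => h (‖z‖ ^ 2)) = fun y => (2 * deriv h (‖y‖ ^ 2)) • y := by
  refine gradient_eq fun y => hasGradientAt_iff_hasFDerivAt.2 ?_
  refine ((hh _).hasDerivAt.comp_hasFDerivAt y
    (hasStrictFDerivAt_norm_sq y).hasFDerivAt).congr_fderiv ?_
  ext v
  simp only [smul_apply, coe_innerSL_apply, nsmul_eq_mul, Nat.cast_ofNat, smul_eq_mul, map_smul,
    InnerProductSpace.toDual_apply_apply]
  ring

theorem hess_comp_norm_sq (hh : ContDiff ℝ 2 h) (y : Vec m) :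
    hess (fun z : Vec m => h (‖z‖ ^ 2)) y =
      (2 * deriv h (‖y‖ ^ 2)) • ContinuousLinearMap.id ℝ (Vec m) +
        (4 * deriv (deriv h) (‖y‖ ^ 2)) • outer y y := by
  have hh' : Differentiable ℝ (deriv h) :=
    (hh.iterate_deriv' 1 1).differentiable (by norm_num)
  rw [hess, gradient_comp_norm_sq (hh.differentiable (by norm_num))]
  have hderiv := (((hh' (‖y‖ ^ 2)).hasDerivAt.comp_hasFDerivAt y
    (hasStrictFDerivAt_norm_sq y).hasFDerivAt).const_mul 2).smul (hasFDerivAt_id y)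
  refine hderiv.fderiv.trans ?_
  ext v i
  simp only [Function.comp_apply, id_eq, add_apply, smul_apply, ContinuousLinearMap.id_apply,
    ContinuousLinearMap.smulRight_apply, coe_innerSL_apply, nsmul_eq_mul, Nat.cast_ofNat,
    smul_eq_mul, PiLp.add_apply, PiLp.smul_apply, outer]
  ring

theorem generator_comp_norm_sq (b : Vec m → Vec m) (σ : Vec m → Mat m d) (hh : ContDiff ℝ 2 h)
    (y : Vec m) :
    generator b σ (fun z => h (‖z‖ ^ 2)) y =
      deriv h (‖y‖ ^ 2) * (2 * ⟪b y, y⟫ + trCLM ((σ y).comp (adj (σ y)))) +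
        2 * deriv (deriv h) (‖y‖ ^ 2) * ‖adj (σ y) y‖ ^ 2 := by
  rw [generator, gradient_comp_norm_sq (hh.differentiable (by norm_num)), hess_comp_norm_sq hh]
  have htr : ∀ (A B : Mat m m) (p q : ℝ), trCLM (A.comp (p • ContinuousLinearMap.id ℝ (Vec m) +
      q • B)) = p * trCLM A + q * trCLM (A.comp B) := by
    intro A B p q
    simp [trCLM, ContinuousLinearMap.comp_add]
  rw [htr, trCLM_comp_outer, inner_comp_adj_self, inner_smul_right]
  ring

/-- With `s h'' ≤ q h'` the second-order term is absorbed into the first-order one, since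
`‖σᵀy‖² ≤ ‖σ‖² ‖y‖²`. -/
theorem generator_comp_norm_sq_le (b : Vec m → Vec m) (σ : Vec m → Mat m d) (hh : ContDiff ℝ 2 h)
    {q : ℝ} (hq : 0 ≤ q) {y : Vec m} (h1 : 0 ≤ deriv h (‖y‖ ^ 2))
    (h2 : ‖y‖ ^ 2 * deriv (deriv h) (‖y‖ ^ 2) ≤ q * deriv h (‖y‖ ^ 2)) :
    generator b σ (fun z => h (‖z‖ ^ 2)) y ≤
      deriv h (‖y‖ ^ 2) * (2 * ⟪b y, y⟫ + (m + 2 * q) * ‖σ y‖ ^ 2) := by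
  have hsecond : deriv (deriv h) (‖y‖ ^ 2) * ‖adj (σ y) y‖ ^ 2 ≤
      q * deriv h (‖y‖ ^ 2) * ‖σ y‖ ^ 2 := by
    rcases le_total (deriv (deriv h) (‖y‖ ^ 2)) 0 with hneg | hpos
    · exact (mul_nonpos_of_nonpos_of_nonneg hneg (sq_nonneg _)).trans (by positivity)
    · calc deriv (deriv h) (‖y‖ ^ 2) * ‖adj (σ y) y‖ ^ 2
          ≤ deriv (deriv h) (‖y‖ ^ 2) * (‖σ y‖ ^ 2 * ‖y‖ ^ 2) := by
            gcongr; exact norm_adj_apply_sq_le (σ y) y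
        _ = ‖y‖ ^ 2 * deriv (deriv h) (‖y‖ ^ 2) * ‖σ y‖ ^ 2 := by ring
        _ ≤ q * deriv h (‖y‖ ^ 2) * ‖σ y‖ ^ 2 := by gcongr
  rw [generator_comp_norm_sq b σ hh]
  have htrace := mul_le_mul_of_nonneg_left (trCLM_comp_adj_le (σ y)) h1
  linarith

end Radial

section Coercivity

variable {m d : ℕ}

/-- Drift `b` and dispersion `σ` are continuous, `b` is dissipative with rate `γ` relative to the
origin, and `σ` grows like `‖y‖ ^ ς`; the constant `K` makes the bounds uniform in a family. -/
structure DissipativeCoeffs (b : Vec m → Vec m) (σ : Vec m → Mat m d) (γ ς K : ℝ) : Prop where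
  continuous_drift : Continuous b
  continuous_dispersion : Continuous σ
  dissipative : ∀ y, 2 * ⟪b y - b 0, y⟫ ≤ -γ * ‖y‖ ^ 2
  norm_drift_zero_le : ‖b 0‖ ≤ K
  norm_dispersion_le : ∀ y, ‖σ y‖ ≤ K * (1 + ‖y‖ ^ ς)

theorem isLittleO_rpow_id {ς : ℝ} (hς : ς < 1) : (fun r : ℝ => r ^ ς) =o[atTop] fun r => r := by
  refine (Asymptotics.isLittleO_iff_tendsto' ?_).2 ?_
  · filter_upwards [eventually_gt_atTop 0] with r hr h0 using absurd h0 hr.ne'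
  · refine (tendsto_rpow_neg_atTop (sub_pos.2 hς)).congr' ?_
    filter_upwards [eventually_gt_atTop 0] with r hr
    rw [neg_sub, Real.rpow_sub_one hr.ne']

theorem exists_coercive_bound {γ ς κ A : ℝ} (K : ℝ) (hς : ς ∈ Set.Ico (0 : ℝ) 1) (hκ : κ < γ)
    (hA : 0 ≤ A) : ∃ D, ∀ {m d : ℕ} {b : Vec m → Vec m} {σ : Vec m → Mat m d},
      DissipativeCoeffs b σ γ ς K → ∀ y, 2 * ⟪b y, y⟫ + A * ‖σ y‖ ^ 2 ≤ D - κ * ‖y‖ ^ 2 := by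
  have hone_add : (fun r : ℝ => 1 + r ^ ς) =o[atTop] fun r => r :=
    (Asymptotics.isLittleO_const_id_atTop 1).add (isLittleO_rpow_id hς.2)
  have hlow : (fun r : ℝ => 2 * K * r + A * K ^ 2 * (1 + r ^ ς) ^ 2) =o[atTop] fun r => r ^ 2 := by
    refine .add ?_ ((hone_add.pow two_pos).const_mul_left _)
    simpa using (Asymptotics.isLittleO_pow_pow_atTop_of_lt one_lt_two).const_mul_left (2 * K)
  obtain ⟨D, hD⟩ := exists_forall_le_add_mul_of_isLittleO
    (by fun_prop (disch := simp [hς.1])) hlow (fun r _ => sq_nonneg r) (sub_pos.2 hκ)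
  refine ⟨D, fun {m d b σ} hbσ y => ?_⟩
  have hdrift : 2 * ⟪b y, y⟫ ≤ -γ * ‖y‖ ^ 2 + 2 * K * ‖y‖ := by
    have hzero : ⟪b 0, y⟫ ≤ K * ‖y‖ := (real_inner_le_norm _ _).trans
      (mul_le_mul_of_nonneg_right hbσ.norm_drift_zero_le (norm_nonneg y))
    have hdiss := hbσ.dissipative y
    rw [inner_sub_left] at hdiss
    linarith
  have hdispersion : A * ‖σ y‖ ^ 2 ≤ A * K ^ 2 * (1 + ‖y‖ ^ ς) ^ 2 := by
    rw [mul_assoc, ← mul_pow]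
    gcongr
    exact hbσ.norm_dispersion_le y
  linarith [hD ‖y‖ (norm_nonneg y)]

theorem exists_pow_bound {β κ : ℝ} (D : ℝ) {p : ℕ} (hp : p ≠ 0) (hβ : β < p * κ) :
    ∃ C, ∀ s, 0 ≤ s → p * s ^ (p - 1) * (D - κ * s) ≤ C - β * s ^ p := by
  have hlow : (fun s : ℝ => p * D * s ^ (p - 1)) =o[atTop] fun s => s ^ p :=
    (Asymptotics.isLittleO_pow_pow_atTop_of_lt (Nat.sub_one_lt hp)).const_mul_left _
  obtain ⟨C, hC⟩ := exists_forall_le_add_mul_of_isLittleO (by fun_prop) hlow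
    (fun s hs => pow_nonneg hs p) (sub_pos.2 hβ)
  refine ⟨C, fun s hs => ?_⟩
  calc p * s ^ (p - 1) * (D - κ * s) = p * D * s ^ (p - 1) - p * κ * s ^ p := by
        rw [← pow_sub_one_mul hp s]; ring
    _ ≤ C - β * s ^ p := by linarith [hC s hs]

end Coercivity

section Truncation

/-- A smooth nonincreasing cutoff equal to `1` on `(-∞, R]` and to `0` on `[R + 1, ∞)`. -/
def cutoff (R s : ℝ) : ℝ := Real.smoothTransition (R + 1 - s)

theorem contDiff_cutoff (R : ℝ) {n : ℕ∞} : ContDiff ℝ n (cutoff R) :=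
  Real.smoothTransition.contDiff.comp (contDiff_const.sub contDiff_id)

theorem cutoff_nonneg (R s : ℝ) : 0 ≤ cutoff R s := Real.smoothTransition.nonneg _

theorem cutoff_le_one (R s : ℝ) : cutoff R s ≤ 1 := Real.smoothTransition.le_one _

theorem cutoff_antitone (R : ℝ) : Antitone (cutoff R) := fun _ _ hst =>
  Real.smoothTransition.monotone (sub_le_sub_left hst _)

theorem cutoff_eq_one {R s : ℝ} (hs : s ≤ R) : cutoff R s = 1 :=
  Real.smoothTransition.one_of_one_le (by linarith)

theorem cutoff_eq_zero {R s : ℝ} (hs : R + 1 ≤ s) : cutoff R s = 0 :=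
  Real.smoothTransition.zero_of_nonpos (by linarith)

/-- The primitive of `cutoff R * h'` vanishing at `R + 1`: up to an additive constant, `h` with its
growth switched off beyond `R + 1`. -/
def truncation (h : ℝ → ℝ) (R s : ℝ) : ℝ := ∫ u in (R + 1)..s, cutoff R u * deriv h u

variable {h : ℝ → ℝ}

theorem contDiff_cutoff_mul_deriv (hh : ContDiff ℝ 2 h) (R : ℝ) :
    ContDiff ℝ 1 fun s => cutoff R s * deriv h s :=
  (contDiff_cutoff R).mul (hh.iterate_deriv' 1 1)

theorem deriv_truncation (hh : ContDiff ℝ 2 h) (R : ℝ) :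
    deriv (truncation h R) = fun s => cutoff R s * deriv h s :=
  funext fun s => (contDiff_cutoff_mul_deriv hh R).continuous.deriv_integral _ (R + 1) s

theorem contDiff_truncation (hh : ContDiff ℝ 2 h) (R : ℝ) : ContDiff ℝ 2 (truncation h R) := by
  rw [← one_add_one_eq_two, contDiff_succ_iff_deriv, deriv_truncation hh]
  refine ⟨fun s => ?_, by simp, contDiff_cutoff_mul_deriv hh R⟩
  exact ((contDiff_cutoff_mul_deriv hh R).continuous.integral_hasStrictDerivAt
    (R + 1) s).hasDerivAt.differentiableAt

theorem truncation_eq_zero {R s : ℝ} (hs : R + 1 ≤ s) : truncation h R s = 0 := by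
  refine (intervalIntegral.integral_congr fun u hu => ?_).trans intervalIntegral.integral_zero
  rw [Set.uIcc_of_le hs] at hu
  simp [cutoff_eq_zero hu.1]

theorem truncation_sub_truncation_zero (hh : ContDiff ℝ 2 h) (R s : ℝ) :
    truncation h R s - truncation h R 0 = ∫ u in (0 : ℝ)..s, cutoff R u * deriv h u := by
  have hint := (contDiff_cutoff_mul_deriv hh R).continuous.intervalIntegrable (μ := volume)
  exact intervalIntegral.integral_interval_sub_left (hint _ _) (hint _ _)

theorem truncation_mem_Icc (hh : ContDiff ℝ 2 h) (hmono : ∀ s, 0 ≤ s → 0 ≤ deriv h s) (R : ℝ)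
    {s : ℝ} (hs : 0 ≤ s) :
    truncation h R s - truncation h R 0 ∈ Set.Icc (cutoff R s * (h s - h 0)) (h s - h 0) := by
  have hderiv : Continuous (deriv h) := hh.continuous_deriv (by norm_num)
  have hint := (contDiff_cutoff_mul_deriv hh R).continuous.intervalIntegrable (μ := volume) 0 s
  have hFTC : ∫ u in (0 : ℝ)..s, deriv h u = h s - h 0 :=
    intervalIntegral.integral_deriv_eq_sub (fun u _ => hh.differentiable (by norm_num) u)
      (hderiv.intervalIntegrable 0 s)
  rw [truncation_sub_truncation_zero hh, ← hFTC, ← intervalIntegral.integral_const_mul]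
  constructor
  · refine intervalIntegral.integral_mono_on hs ((hderiv.intervalIntegrable 0 s).const_mul _) hint
      fun u hu => mul_le_mul_of_nonneg_right (cutoff_antitone R hu.2) (hmono u hu.1)
  · exact intervalIntegral.integral_mono_on hs hint (hderiv.intervalIntegrable 0 s)
      fun u hu => mul_le_of_le_one_left (hmono u hu.1) (cutoff_le_one R u)

theorem mul_deriv_deriv_truncation_le (hh : ContDiff ℝ 2 h) (R : ℝ) {q s : ℝ} (hs : 0 ≤ s)
    (h1 : 0 ≤ deriv h s) (h2 : s * deriv (deriv h) s ≤ q * deriv h s) :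
    s * deriv (deriv (truncation h R)) s ≤ q * deriv (truncation h R) s := by
  have hderiv : deriv (fun u => cutoff R u * deriv h u) s =
      deriv (cutoff R) s * deriv h s + cutoff R s * deriv (deriv h) s :=
    deriv_fun_mul ((contDiff_cutoff R (n := 1)).differentiable (by norm_num) s)
      ((hh.iterate_deriv' 1 1).differentiable (by norm_num) s)
  have hcut : s * deriv h s * deriv (cutoff R) s ≤ 0 :=
    mul_nonpos_of_nonneg_of_nonpos (by positivity) (cutoff_antitone R).deriv_nonpos
  rw [deriv_truncation hh, hderiv]
  linarith [mul_le_mul_of_nonneg_left h2 (cutoff_nonneg R s)]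

theorem generator_truncation_comp_norm_sq_le {m d : ℕ} (b : Vec m → Vec m) (σ : Vec m → Mat m d)
    (hh : ContDiff ℝ 2 h) {q : ℝ} (hq : 0 ≤ q) (R : ℝ) {y : Vec m} (h1 : 0 ≤ deriv h (‖y‖ ^ 2))
    (h2 : ‖y‖ ^ 2 * deriv (deriv h) (‖y‖ ^ 2) ≤ q * deriv h (‖y‖ ^ 2)) :
    generator b σ (fun z => truncation h R (‖z‖ ^ 2)) y ≤
      cutoff R (‖y‖ ^ 2) *
        (deriv h (‖y‖ ^ 2) * (2 * ⟪b y, y⟫ + (m + 2 * q) * ‖σ y‖ ^ 2)) := by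
  have hderiv : deriv (truncation h R) (‖y‖ ^ 2) = cutoff R (‖y‖ ^ 2) * deriv h (‖y‖ ^ 2) :=
    congrFun (deriv_truncation hh R) _
  rw [← mul_assoc, ← hderiv]
  exact generator_comp_norm_sq_le b σ (contDiff_truncation hh R) hq
    (hderiv ▸ mul_nonneg (cutoff_nonneg _ _) h1)
    (mul_deriv_deriv_truncation_le hh R (sq_nonneg _) h1 h2)

theorem testFun_comp_norm_sq (m : ℕ) {M : ℝ} (hh : ContDiff ℝ 2 h) (hM : ∀ s, M ≤ s → h s = 0) :
    TestFun fun y : Vec m => h (‖y‖ ^ 2) := by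
  refine ⟨hh.comp (contDiff_norm_sq ℝ), .intro (isCompact_closedBall 0 √M) fun y hy => hM _ ?_⟩
  rw [mem_closedBall_zero_iff, not_le] at hy
  exact (Real.lt_sq_of_sqrt_lt hy).le

end Truncation

section Lyapunov

variable {m d : ℕ} {b : Vec m → Vec m} {σ : Vec m → Mat m d}

/-- The drift condition `L V ≤ C - β V` for the generator `L`, in a form that only involves test
functions: up to constants `φ k` lies between `ψ k` and `V`, the functions `ψ k` tend to `V`, and
`L (φ k) ≤ C - β ψ k`. -/
structure IsLyapunovApprox (b : Vec m → Vec m) (σ : Vec m → Mat m d) (V : Vec m → ℝ) (β C : ℝ)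
    (φ ψ : ℕ → Vec m → ℝ) : Prop where
  continuous : Continuous V
  testFun : ∀ k, TestFun (φ k)
  continuous_trunc : ∀ k, Continuous (ψ k)
  trunc_nonneg : ∀ k y, 0 ≤ ψ k y
  sandwich : ∀ k, ∃ c, ∀ y, φ k y + c ∈ Set.Icc (ψ k y) (V y)
  tendsto_trunc : ∀ y, Tendsto (fun k => ψ k y) atTop (𝓝 (V y))
  generator_le : ∀ k y, generator b σ (φ k) y ≤ C - β * ψ k y

theorem isLyapunovApprox_comp_norm_sq {h : ℝ → ℝ} {β C D q κ : ℝ} (hh : ContDiff ℝ 2 h)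
    (h0 : h 0 = 0) (hq : 0 ≤ q) (hC : 0 ≤ C) (hmono : ∀ s, 0 ≤ s → 0 ≤ deriv h s)
    (hconv : ∀ s, 0 ≤ s → s * deriv (deriv h) s ≤ q * deriv h s)
    (hdrift : ∀ s, 0 ≤ s → deriv h s * (D - κ * s) ≤ C - β * h s)
    (hcoer : ∀ y, 2 * ⟪b y, y⟫ + (m + 2 * q) * ‖σ y‖ ^ 2 ≤ D - κ * ‖y‖ ^ 2) :
    IsLyapunovApprox b σ (fun y => h (‖y‖ ^ 2)) β C (fun k y => truncation h k (‖y‖ ^ 2))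
      (fun k y => cutoff k (‖y‖ ^ 2) * h (‖y‖ ^ 2)) where
  continuous := hh.continuous.comp (by fun_prop)
  testFun k := testFun_comp_norm_sq m (contDiff_truncation hh k) fun _ => truncation_eq_zero
  continuous_trunc k :=
    ((contDiff_cutoff (k : ℝ) (n := 0)).continuous.mul hh.continuous).comp
      (g := fun s => cutoff k s * h s) (by fun_prop)
  trunc_nonneg k y := by
    have hhmono : MonotoneOn h (Set.Ici 0) :=
      monotoneOn_of_deriv_nonneg (convex_Ici 0) hh.continuous.continuousOn
        (hh.differentiable (by norm_num)).differentiableOn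
        fun s hs => hmono s (interior_subset hs)
    have hle : h 0 ≤ h (‖y‖ ^ 2) :=
      hhmono Set.self_mem_Ici (Set.mem_Ici.2 (sq_nonneg ‖y‖)) (sq_nonneg _)
    exact mul_nonneg (cutoff_nonneg _ _) (h0 ▸ hle)
  sandwich k := ⟨-truncation h k 0, fun y => by
    simpa [h0, sub_eq_add_neg] using truncation_mem_Icc hh hmono k (sq_nonneg ‖y‖)⟩
  tendsto_trunc y := by
    refine tendsto_const_nhds.congr' ?_
    filter_upwards [tendsto_natCast_atTop_atTop.eventually_ge_atTop (‖y‖ ^ 2)] with k hk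
    rw [cutoff_eq_one hk, one_mul]
  generator_le k y := by
    set s := ‖y‖ ^ 2
    have hs : 0 ≤ s := sq_nonneg _
    calc generator b σ (fun z => truncation h k (‖z‖ ^ 2)) y
        ≤ cutoff k s * (deriv h s * (2 * ⟪b y, y⟫ + (m + 2 * q) * ‖σ y‖ ^ 2)) :=
          generator_truncation_comp_norm_sq_le b σ hh hq k (hmono s hs) (hconv s hs)
      _ ≤ cutoff k s * (deriv h s * (D - κ * s)) := mul_le_mul_of_nonneg_left
          (mul_le_mul_of_nonneg_left (hcoer y) (hmono s hs)) (cutoff_nonneg _ _)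
      _ ≤ cutoff k s * (C - β * h s) :=
          mul_le_mul_of_nonneg_left (hdrift s hs) (cutoff_nonneg _ _)
      _ ≤ C - β * (cutoff k s * h s) := by
          linarith [mul_le_of_le_one_left hC (cutoff_le_one k s)]

theorem mul_deriv_pow (n : ℕ) (s : ℝ) : s * deriv (fun s : ℝ => s ^ n) s = n * s ^ n := by
  rcases n with _ | n
  · simp
  · rw [deriv_pow_field, Nat.add_sub_cancel]
    ring

theorem exists_isLyapunovApprox_norm_pow {γ ς β : ℝ} (K : ℝ) {p : ℕ} (m d : ℕ)
    (hς : ς ∈ Set.Ico (0 : ℝ) 1) (hp : p ≠ 0) (hβ : β < p * γ) :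
    ∃ C > 0, ∀ {b : Vec m → Vec m} {σ : Vec m → Mat m d}, DissipativeCoeffs b σ γ ς K →
      ∃ φ ψ, IsLyapunovApprox b σ (fun y => ‖y‖ ^ (2 * p)) β C φ ψ := by
  have hp0 : (0 : ℝ) < p := Nat.cast_pos.2 (Nat.pos_of_ne_zero hp)
  obtain ⟨κ, hβκ, hκγ⟩ := exists_between ((div_lt_iff₀' hp0).2 hβ)
  set q : ℝ := ((p - 1 : ℕ) : ℝ)
  obtain ⟨D, hD⟩ := exists_coercive_bound (A := m + 2 * q) K hς hκγ (by positivity)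
  obtain ⟨C, hC⟩ := exists_pow_bound D hp ((div_lt_iff₀' hp0).1 hβκ)
  have hpow : deriv (fun s : ℝ => s ^ p) = fun s : ℝ => p * s ^ (p - 1) := by
    ext s; simp
  have hpow' : ∀ s : ℝ, s * deriv (deriv fun s : ℝ => s ^ p) s = q * (p * s ^ (p - 1)) := by
    intro s
    rw [hpow, deriv_const_mul _ (by fun_prop), mul_left_comm, mul_deriv_pow, mul_left_comm]
  refine ⟨max C 1, by positivity, fun {b σ} hbσ => ?_⟩
  simp only [pow_mul]
  exact ⟨_, _, isLyapunovApprox_comp_norm_sq (h := fun s => s ^ p) (by fun_prop) (zero_pow hp)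
    (Nat.cast_nonneg _) (by positivity) (fun s hs => by rw [hpow]; positivity)
    (fun s _ => by rw [hpow', hpow])
    (fun s hs => by rw [hpow]; linarith [hC s hs, le_max_left C 1]) (hD hbσ)⟩

end Lyapunov

theorem TestFun.exists_bound {m : ℕ} {φ : Vec m → ℝ} (hφ : TestFun φ) : ∃ M, ∀ y, ‖φ y‖ ≤ M :=
  hφ.1.continuous.bounded_above_of_compact_support hφ.2

theorem integrable_generator {m d : ℕ} {b : Vec m → Vec m} {σ : Vec m → Mat m d} {φ : Vec m → ℝ}
    {μ : Measure (Vec m)} [IsFiniteMeasure μ] (hb : Continuous b) (hσ : Continuous σ)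
    (hφ : TestFun φ) : Integrable (generator b σ φ) μ :=
  (continuous_generator hb hσ hφ.1).integrable_of_hasCompactSupport
    (hasCompactSupport_generator b σ hφ.2)

namespace IsLyapunovApprox

variable {m d : ℕ} {b : Vec m → Vec m} {σ : Vec m → Mat m d} {V : Vec m → ℝ} {β C : ℝ}
  {φ ψ : ℕ → Vec m → ℝ}

theorem trunc_le (hV : IsLyapunovApprox b σ V β C φ ψ) (k : ℕ) (y : Vec m) : ψ k y ≤ V y := by
  obtain ⟨c, hc⟩ := hV.sandwich k
  exact (hc y).1.trans (hc y).2

theorem nonneg (hV : IsLyapunovApprox b σ V β C φ ψ) (y : Vec m) : 0 ≤ V y :=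
  (hV.trunc_nonneg 0 y).trans (hV.trunc_le 0 y)

theorem exists_bound (hV : IsLyapunovApprox b σ V β C φ ψ) (k : ℕ) : ∃ M, ∀ y, ‖ψ k y‖ ≤ M := by
  obtain ⟨c, hc⟩ := hV.sandwich k
  obtain ⟨M, hM⟩ := (hV.testFun k).exists_bound
  refine ⟨M + c, fun y => ?_⟩
  rw [Real.norm_of_nonneg (hV.trunc_nonneg k y)]
  linarith [(hc y).1, (le_abs_self _).trans (hM y)]

theorem trunc_add_integral_le (hV : IsLyapunovApprox b σ V β C φ ψ) (hb : Continuous b)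
    (hσ : Continuous σ) {k : ℕ} {c : ℝ} (hc : ∀ y, ψ k y ≤ φ k y + c) {x : ℝ → Vec m}
    (hx : Continuous x) {s t : ℝ} (hst : s ≤ t) :
    ψ k (x t) + β * ∫ r in s..t, ψ k (x r) ≤
      φ k (x t) - (∫ r in s..t, generator b σ (φ k) (x r)) + (c + C * (t - s)) := by
  have hψx : IntervalIntegrable (fun r => ψ k (x r)) volume s t :=
    ((hV.continuous_trunc k).comp hx).intervalIntegrable s t
  have hLx : IntervalIntegrable (fun r => generator b σ (φ k) (x r)) volume s t :=
    ((continuous_generator hb hσ (hV.testFun k).1).comp hx).intervalIntegrable s t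
  have hmono : ∫ r in s..t, generator b σ (φ k) (x r) ≤ ∫ r in s..t, (C - β * ψ k (x r)) :=
    intervalIntegral.integral_mono hst hLx (intervalIntegrable_const.sub (hψx.const_mul β))
      fun r => hV.generator_le k (x r)
  rw [intervalIntegral.integral_sub intervalIntegrable_const (hψx.const_mul β),
    intervalIntegral.integral_const_mul, intervalIntegral.integral_const, smul_eq_mul] at hmono
  linarith [hc (x t)]

theorem integral_le_of_integral_generator_eq_zero (hV : IsLyapunovApprox b σ V β C φ ψ)
    (hb : Continuous b) (hσ : Continuous σ) (hβ : 0 < β) {ν : Measure (Vec m)}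
    [IsProbabilityMeasure ν] (hν : ∀ φ, TestFun φ → ∫ y, generator b σ φ y ∂ν = 0) :
    Integrable V ν ∧ ∫ y, V y ∂ν ≤ C / β := by
  have hint : ∀ k, Integrable (ψ k) ν := fun k => by
    obtain ⟨M, hM⟩ := hV.exists_bound k
    exact .of_bound (hV.continuous_trunc k).aestronglyMeasurable M (ae_of_all _ hM)
  refine integrable_and_integral_le_of_tendsto hint hV.trunc_nonneg hV.tendsto_trunc fun k => ?_
  have hmono : ∫ y, generator b σ (φ k) y ∂ν ≤ ∫ y, (C - β * ψ k y) ∂ν :=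
    integral_mono (integrable_generator hb hσ (hV.testFun k))
      ((integrable_const C).sub ((hint k).const_mul β)) (hV.generator_le k)
  rw [hν _ (hV.testFun k), integral_sub (integrable_const C) ((hint k).const_mul β),
    integral_const_mul] at hmono
  rw [le_div_iff₀' hβ]
  simpa using hmono

end IsLyapunovApprox

theorem MartOn.integral_eq {Ω : Type} {mΩ : MeasurableSpace Ω} {P : Measure Ω}
    [IsFiniteMeasure P] {ℱ : Filtration ℝ mΩ} {M : ℝ → Ω → ℝ} (hM : MartOn P ℱ M) {s t : ℝ}
    (hs : 0 ≤ s) (hst : s ≤ t) : ∫ ω, M t ω ∂P = ∫ ω, M s ω ∂P := by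
  rw [← integral_condExp (ℱ.le s)]
  exact integral_congr_ae (hM.2 s t hs hst)

section MartingaleSolution

variable {m d : ℕ} {b : Vec m → Vec m} {σ : Vec m → Mat m d} {V : Vec m → ℝ} {β C : ℝ}
  {φ ψ : ℕ → Vec m → ℝ} {Ω : Type} {mΩ : MeasurableSpace Ω} {P : Measure Ω} {ℱ : Filtration ℝ mΩ}
  {X : ℝ → Ω → Vec m}

/-- `X` is a continuous solution of the martingale problem for `generator b σ`, i.e. a weak
solution of `dX = b(X) dt + σ(X) dW`. -/
structure IsMartingaleSolution (P : Measure Ω) (ℱ : Filtration ℝ mΩ) (b : Vec m → Vec m)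
    (σ : Vec m → Mat m d) (X : ℝ → Ω → Vec m) : Prop where
  measurable : ∀ t, Measurable (X t)
  continuous_path : ∀ ω, Continuous fun t => X t ω
  martOn : ∀ φ, TestFun φ → MartOn P ℱ fun t ω =>
    φ (X t ω) - ∫ s in Set.Ioc (0 : ℝ) t, generator b σ φ (X s ω)

namespace IsMartingaleSolution

theorem measurable_uncurry (hX : IsMartingaleSolution P ℱ b σ X) {h : Vec m → ℝ}
    (hh : Continuous h) : Measurable (Function.uncurry fun r ω => h (X r ω)) :=
  measurable_uncurry_of_continuous_of_measurable (fun ω => hh.comp (hX.continuous_path ω))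
    fun r => hh.measurable.comp (hX.measurable r)

theorem integrable_comp_of_bounded [IsFiniteMeasure P] (hX : IsMartingaleSolution P ℱ b σ X)
    {h : Vec m → ℝ} (hh : Continuous h) {M : ℝ} (hM : ∀ y, ‖h y‖ ≤ M) (t : ℝ) :
    Integrable (fun ω => h (X t ω)) P :=
  .of_bound (hh.measurable.comp (hX.measurable t)).aestronglyMeasurable M
    (ae_of_all _ fun ω => hM (X t ω))

theorem integrable_intervalIntegral_of_bounded [IsFiniteMeasure P]
    (hX : IsMartingaleSolution P ℱ b σ X) {h : Vec m → ℝ} (hh : Continuous h) {M : ℝ}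
    (hM : ∀ y, ‖h y‖ ≤ M) {s t : ℝ} (hst : s ≤ t) :
    Integrable (fun ω => ∫ r in s..t, h (X r ω)) P := by
  simp only [intervalIntegral.integral_of_le hst]
  have hprod : Integrable (Function.uncurry fun r ω => h (X r ω))
      ((volume.restrict (Set.Ioc s t)).prod P) :=
    .of_bound (hX.measurable_uncurry hh).aestronglyMeasurable M (ae_of_all _ fun z => hM _)
  exact hprod.integral_prod_right

theorem integrable_sub_and_integral_eq [IsFiniteMeasure P]
    (hX : IsMartingaleSolution P ℱ b σ X) (hb : Continuous b) (hσ : Continuous σ)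
    {φ : Vec m → ℝ} (hφ : TestFun φ) {s t : ℝ} (hs : 0 ≤ s) (hst : s ≤ t) :
    Integrable (fun ω => φ (X t ω) - ∫ r in s..t, generator b σ φ (X r ω)) P ∧
      ∫ ω, (φ (X t ω) - ∫ r in s..t, generator b σ φ (X r ω)) ∂P = ∫ ω, φ (X s ω) ∂P := by
  have hL := continuous_generator hb hσ hφ.1
  obtain ⟨M, hM⟩ := hφ.exists_bound
  obtain ⟨N, hN⟩ := hL.bounded_above_of_compact_support (hasCompactSupport_generator b σ hφ.2)
  have hφX := hX.integrable_comp_of_bounded hφ.1.continuous hM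
  have hLX := fun {u v : ℝ} (huv : u ≤ v) => hX.integrable_intervalIntegral_of_bounded hL hN huv
  have hLX_add : Integrable (fun ω => (∫ r in (0 : ℝ)..s, generator b σ φ (X r ω)) +
      ∫ r in s..t, generator b σ φ (X r ω)) P := (hLX hs).add (hLX hst)
  have hmart : ∫ ω, (φ (X t ω) - ∫ r in (0 : ℝ)..t, generator b σ φ (X r ω)) ∂P =
      ∫ ω, (φ (X s ω) - ∫ r in (0 : ℝ)..s, generator b σ φ (X r ω)) ∂P := by
    simpa only [intervalIntegral.integral_of_le, hs, hs.trans hst]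
      using (hX.martOn φ hφ).integral_eq hs hst
  have hadd : ∀ ω, ∫ r in (0 : ℝ)..t, generator b σ φ (X r ω) =
      (∫ r in (0 : ℝ)..s, generator b σ φ (X r ω)) + ∫ r in s..t, generator b σ φ (X r ω) :=
    fun ω => have hint := (hL.comp (hX.continuous_path ω)).intervalIntegrable
      (intervalIntegral.integral_add_adjacent_intervals (hint 0 s) (hint s t)).symm
  simp only [hadd] at hmart
  rw [integral_sub (hφX t) hLX_add, integral_add (hLX hs) (hLX hst),
    integral_sub (hφX s) (hLX hs)] at hmart
  refine ⟨(hφX t).sub (hLX hst), ?_⟩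
  rw [integral_sub (hφX t) (hLX hst)]
  linarith

theorem integral_trunc_add_le [IsProbabilityMeasure P] (hX : IsMartingaleSolution P ℱ b σ X)
    (hb : Continuous b) (hσ : Continuous σ) (hV : IsLyapunovApprox b σ V β C φ ψ) (k : ℕ)
    {s t : ℝ} (hs : 0 ≤ s) (hst : s ≤ t) (hVs : Integrable (fun ω => V (X s ω)) P) :
    Integrable (fun ω => ψ k (X t ω) + β * ∫ r in s..t, ψ k (X r ω)) P ∧
      ∫ ω, (ψ k (X t ω) + β * ∫ r in s..t, ψ k (X r ω)) ∂P ≤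
        ∫ ω, V (X s ω) ∂P + C * (t - s) := by
  obtain ⟨c, hc⟩ := hV.sandwich k
  obtain ⟨M, hM⟩ := hV.exists_bound k
  obtain ⟨N, hN⟩ := (hV.testFun k).exists_bound
  have hψ := hV.continuous_trunc k
  have hint : Integrable (fun ω => ψ k (X t ω) + β * ∫ r in s..t, ψ k (X r ω)) P :=
    (hX.integrable_comp_of_bounded hψ hM t).add
      ((hX.integrable_intervalIntegral_of_bounded hψ hM hst).const_mul β)
  obtain ⟨hDint, hD⟩ := hX.integrable_sub_and_integral_eq hb hσ (hV.testFun k) hs hst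
  refine ⟨hint, ?_⟩
  have hφs := hX.integrable_comp_of_bounded (hV.testFun k).1.continuous hN s
  calc ∫ ω, (ψ k (X t ω) + β * ∫ r in s..t, ψ k (X r ω)) ∂P
      ≤ ∫ ω, (φ k (X t ω) - (∫ r in s..t, generator b σ (φ k) (X r ω)) + (c + C * (t - s))) ∂P :=
        integral_mono hint (hDint.add (integrable_const _)) fun ω =>
          hV.trunc_add_integral_le hb hσ (fun y => (hc y).1) (hX.continuous_path ω) hst
    _ = ∫ ω, (φ k (X s ω) + c) ∂P + C * (t - s) := by
        rw [integral_add hDint (integrable_const _), hD, integral_add hφs (integrable_const c)]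
        simp [add_assoc]
    _ ≤ ∫ ω, V (X s ω) ∂P + C * (t - s) := by
        gcongr ?_ + _
        exact integral_mono (hφs.add (integrable_const c)) hVs fun ω => (hc (X s ω)).2

theorem integral_add_le [IsProbabilityMeasure P] (hX : IsMartingaleSolution P ℱ b σ X)
    (hb : Continuous b) (hσ : Continuous σ) (hV : IsLyapunovApprox b σ V β C φ ψ) (hβ : 0 ≤ β)
    {s t : ℝ} (hs : 0 ≤ s) (hst : s ≤ t) (hVs : Integrable (fun ω => V (X s ω)) P) :
    Integrable (fun ω => V (X t ω) + β * ∫ r in s..t, V (X r ω)) P ∧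
      ∫ ω, (V (X t ω) + β * ∫ r in s..t, V (X r ω)) ∂P ≤ ∫ ω, V (X s ω) ∂P + C * (t - s) := by
  refine integrable_and_integral_le_of_tendsto
    (fun k => (hX.integral_trunc_add_le hb hσ hV k hs hst hVs).1) (fun k ω => ?_) (fun ω => ?_)
    (fun k => (hX.integral_trunc_add_le hb hσ hV k hs hst hVs).2)
  · exact add_nonneg (hV.trunc_nonneg k _)
      (mul_nonneg hβ (intervalIntegral.integral_nonneg hst fun r _ => hV.trunc_nonneg k _))
  · have hψω := fun k => (hV.continuous_trunc k).comp (hX.continuous_path ω)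
    refine (hV.tendsto_trunc _).add (.const_mul β ?_)
    refine intervalIntegral.tendsto_integral_filter_of_dominated_convergence
      (fun r => V (X r ω)) (.of_forall fun k => (hψω k).aestronglyMeasurable)
      (.of_forall fun k => ae_of_all _ fun r _ => ?_)
      ((hV.continuous.comp (hX.continuous_path ω)).intervalIntegrable s t)
      (ae_of_all _ fun r _ => hV.tendsto_trunc _)
    rw [Real.norm_of_nonneg (hV.trunc_nonneg k _)]
    exact hV.trunc_le k _

theorem integrable_lyapunov [IsProbabilityMeasure P] (hX : IsMartingaleSolution P ℱ b σ X)
    (hb : Continuous b) (hσ : Continuous σ) (hV : IsLyapunovApprox b σ V β C φ ψ) (hβ : 0 ≤ β)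
    (hV0 : Integrable (fun ω => V (X 0 ω)) P) {t : ℝ} (ht : 0 ≤ t) :
    Integrable (fun ω => V (X t ω)) P := by
  refine (hX.integral_add_le hb hσ hV hβ le_rfl ht hV0).1.mono'
    (hV.continuous.measurable.comp (hX.measurable t)).aestronglyMeasurable (ae_of_all _ fun ω => ?_)
  rw [Real.norm_of_nonneg (hV.nonneg _)]
  exact le_add_of_nonneg_right
    (mul_nonneg hβ (intervalIntegral.integral_nonneg ht fun r _ => hV.nonneg _))

theorem integrable_uncurry_lyapunov [IsProbabilityMeasure P] (hX : IsMartingaleSolution P ℱ b σ X)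
    (hb : Continuous b) (hσ : Continuous σ) (hV : IsLyapunovApprox b σ V β C φ ψ) (hβ : 0 < β)
    {s t : ℝ} (hs : 0 ≤ s) (hst : s ≤ t) (hVs : Integrable (fun ω => V (X s ω)) P) :
    Integrable (Function.uncurry fun r ω => V (X r ω))
      ((volume.restrict (Set.uIoc s t)).prod P) := by
  have hmeas := (hX.measurable_uncurry hV.continuous).aestronglyMeasurable
    (μ := (volume.restrict (Set.uIoc s t)).prod P)
  refine (integrable_prod_iff' hmeas).2 ⟨ae_of_all _ fun ω =>
    ((hV.continuous.comp (hX.continuous_path ω)).intervalIntegrable s t).def', ?_⟩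
  refine ((hX.integral_add_le hb hσ hV hβ.le hs hst hVs).1.const_mul β⁻¹).mono'
    hmeas.norm.prod_swap.integral_prod_right' (ae_of_all _ fun ω => ?_)
  have hnorm : ∫ r, ‖V (X r ω)‖ ∂volume.restrict (Set.uIoc s t) = ∫ r in s..t, V (X r ω) := by
    rw [intervalIntegral.integral_of_le hst, Set.uIoc_of_le hst]
    exact integral_congr_ae (ae_of_all _ fun r => Real.norm_of_nonneg (hV.nonneg _))
  have hnonneg : 0 ≤ ∫ r in s..t, V (X r ω) :=
    intervalIntegral.integral_nonneg hst fun r _ => hV.nonneg _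
  simp only [Function.uncurry_apply_pair]
  rw [hnorm, Real.norm_of_nonneg hnonneg, mul_add, inv_mul_cancel_left₀ hβ.ne']
  exact le_add_of_nonneg_left (mul_nonneg (inv_nonneg.2 hβ.le) (hV.nonneg _))

theorem integral_lyapunov_le [IsProbabilityMeasure P] (hX : IsMartingaleSolution P ℱ b σ X)
    (hb : Continuous b) (hσ : Continuous σ) (hV : IsLyapunovApprox b σ V β C φ ψ) (hβ : 0 < β)
    (hC : 0 ≤ C) (hV0 : Integrable (fun ω => V (X 0 ω)) P) {t : ℝ} (ht : 0 ≤ t) :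
    ∫ ω, V (X t ω) ∂P ≤ Real.exp (-(β * t)) * ∫ ω, V (X 0 ω) ∂P + C / β := by
  have hVX : ∀ {s : ℝ}, 0 ≤ s → Integrable (fun ω => V (X s ω)) P := fun hs =>
    hX.integrable_lyapunov hb hσ hV hβ.le hV0 hs
  have hprod : ∀ {s : ℝ}, 0 ≤ s → s ≤ t → Integrable (Function.uncurry fun r ω => V (X r ω))
      ((volume.restrict (Set.uIoc s t)).prod P) := fun hs hst =>
    hX.integrable_uncurry_lyapunov hb hσ hV hβ hs hst (hVX hs)
  refine le_exp_neg_mul_add_of_add_integral_le (u := fun s => ∫ ω, V (X s ω) ∂P) hβ hC ht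
    (intervalIntegrable_iff.2 (hprod le_rfl ht).integral_prod_left) fun s hs => ?_
  calc ∫ ω, V (X t ω) ∂P + β * ∫ r in s..t, ∫ ω, V (X r ω) ∂P
      = ∫ ω, (V (X t ω) + β * ∫ r in s..t, V (X r ω)) ∂P := by
        have hint : Integrable (fun ω => ∫ r in s..t, V (X r ω)) P := by
          simpa only [intervalIntegral.integral_of_le hs.2, Set.uIoc_of_le hs.2,
            Function.uncurry_apply_pair]
            using (hprod hs.1 hs.2).integral_prod_right
        rw [intervalIntegral_integral_swap (hprod hs.1 hs.2), integral_add (hVX ht)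
          (hint.const_mul β), integral_const_mul]
    _ ≤ ∫ ω, V (X s ω) ∂P + C * (t - s) :=
        (hX.integral_add_le hb hσ hV hβ.le hs.1 hs.2 (hVX hs.1)).2

end IsMartingaleSolution

end MartingaleSolution

theorem W2_self {k : ℕ} (μ : Measure (Vec k)) : W2 μ μ = 0 := by
  refine IsLeast.csInf_eq ⟨⟨μ.map fun x => (x, x), ⟨?_, ?_⟩, ?_⟩, ?_⟩
  · rw [Measure.map_map (by fun_prop) (by fun_prop)]
    exact Measure.map_id
  · rw [Measure.map_map (by fun_prop) (by fun_prop)]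
    exact Measure.map_id
  · rw [integral_map (by fun_prop) (Continuous.aestronglyMeasurable (by fun_prop))]
    simp
  · rintro c ⟨π, -, rfl⟩
    exact Real.sqrt_nonneg _

theorem continuous_of_forall_norm_sub_le {E F : Type*} [SeminormedAddCommGroup E]
    [SeminormedAddCommGroup F] {h : E → F} {L : ℝ} (hh : ∀ y z, ‖h y - h z‖ ≤ L * ‖y - z‖) :
    Continuous h :=
  (LipschitzWith.of_dist_le' (K := L) fun y z => by
    simpa only [dist_eq_norm] using hh y z).continuous

namespace FrozenSetting

variable {n m d : ℕ} {Ω : Type} [mΩ : MeasurableSpace Ω] {P : Measure Ω} {ℱ : Filtration ℝ mΩ}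

theorem norm_sub_add_norm_sub_le (FS : FrozenSetting n m d Ω P ℱ) (x : Vec n)
    {μ : Measure (Vec n)} (hμ : memP2 μ) (y z : Vec m) :
    ‖FS.f x μ y - FS.f x μ z‖ + ‖FS.g x μ y - FS.g x μ z‖ ≤ FS.CL * ‖y - z‖ := by
  simpa [W2_self] using FS.lip x x μ μ y z hμ hμ

theorem dissipativeCoeffs (FS : FrozenSetting n m d Ω P ℱ) (x : Vec n) {μ : Measure (Vec n)}
    (hμ : memP2 μ) : DissipativeCoeffs (FS.f x μ) (FS.g x μ) FS.γ FS.ς FS.CG where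
  continuous_drift := continuous_of_forall_norm_sub_le fun y z =>
    (le_add_of_nonneg_right (norm_nonneg _)).trans (FS.norm_sub_add_norm_sub_le x hμ y z)
  continuous_dispersion := continuous_of_forall_norm_sub_le fun y z =>
    (le_add_of_nonneg_left (norm_nonneg _)).trans (FS.norm_sub_add_norm_sub_le x hμ y z)
  dissipative y := by
    simpa using (le_add_of_nonneg_right (sq_nonneg _)).trans (FS.dissip x μ y 0 hμ)
  norm_drift_zero_le := by simpa using FS.growthf x μ 0 hμ
  norm_dispersion_le y := FS.growthg x μ y hμ

theorem isMartingaleSolution (FS : FrozenSetting n m d Ω P ℱ) (x : Vec n) {μ : Measure (Vec n)}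
    (hμ : memP2 μ) (y : Vec m) :
    IsMartingaleSolution P ℱ (FS.f x μ) (FS.g x μ) (FS.Y x μ y) where
  measurable := FS.measY x μ y
  continuous_path := FS.contY x μ y
  martOn := FS.mart x μ y hμ

end FrozenSetting

theorem sixth_moment_frozen_general {γ ς β : ℝ} (K : ℝ) {p : ℕ} (m d : ℕ)
    (hς : ς ∈ Set.Ico (0 : ℝ) 1) (hβ : β ∈ Set.Ioo 0 (p * γ)) :
    ∃ C > 0, ∀ {b : Vec m → Vec m} {σ : Vec m → Mat m d}, DissipativeCoeffs b σ γ ς K →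
      (∀ {Ω : Type} {mΩ : MeasurableSpace Ω} {P : Measure Ω} [IsProbabilityMeasure P]
        {ℱ : Filtration ℝ mΩ} {X : ℝ → Ω → Vec m}, IsMartingaleSolution P ℱ b σ X →
        Integrable (fun ω => ‖X 0 ω‖ ^ (2 * p)) P → ∀ {t : ℝ}, 0 ≤ t →
          Integrable (fun ω => ‖X t ω‖ ^ (2 * p)) P ∧
            ∫ ω, ‖X t ω‖ ^ (2 * p) ∂P ≤
              Real.exp (-(β * t)) * ∫ ω, ‖X 0 ω‖ ^ (2 * p) ∂P + C) ∧
      ∀ {ν : Measure (Vec m)} [IsProbabilityMeasure ν],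
        (∀ φ, TestFun φ → ∫ y, generator b σ φ y ∂ν = 0) →
          Integrable (fun y => ‖y‖ ^ (2 * p)) ν ∧ ∫ y, ‖y‖ ^ (2 * p) ∂ν ≤ C := by
  have hp : p ≠ 0 := by
    rintro rfl
    simpa using hβ.1.trans hβ.2
  obtain ⟨C, hC, hLyapunov⟩ := exists_isLyapunovApprox_norm_pow K m d hς hp hβ.2
  refine ⟨C / β, div_pos hC hβ.1, fun {b σ} hbσ => ?_⟩
  obtain ⟨hb, hσ⟩ := And.intro hbσ.continuous_drift hbσ.continuous_dispersion
  obtain ⟨φ, ψ, hV⟩ := hLyapunov hbσ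
  exact ⟨fun hX hX0 t ht => ⟨hX.integrable_lyapunov hb hσ hV hβ.1.le hX0 ht,
      hX.integral_lyapunov_le hb hσ hV hβ.1 hC.le hX0 ht⟩,
    fun hν => hV.integral_le_of_integral_generator_eq_zero hb hσ hβ.1 hν⟩

/-- **Estimate (5.13).** Under the dissipativity and growth conditions A1–A2 on `f, g`,
there are `β ∈ (0,γ)` and `C > 0` with
`sup_{x,μ} E|Y_t^{x,μ,y}|⁶ ≤ e^{−βt}|y|⁶ + C` and `sup_{x,μ} ∫ |y|⁶ ν^{x,μ}(dy) < ∞`. -/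
theorem sixth_moment_frozen {n m d : ℕ} {Ω : Type} [mΩ : MeasurableSpace Ω]
    {P : Measure Ω} {ℱ : Filtration ℝ mΩ} (FS : FrozenSetting n m d Ω P ℱ) :
    ∃ β ∈ Set.Ioo (0 : ℝ) FS.γ, ∃ Cc > (0 : ℝ),
      (∀ (x : Vec n) (μ : Measure (Vec n)) (y : Vec m) (t : ℝ), memP2 μ → 0 ≤ t →
        ∫ ω, ‖FS.Y x μ y t ω‖ ^ (6 : ℕ) ∂P ≤ Real.exp (-(β * t)) * ‖y‖ ^ (6 : ℕ) + Cc) ∧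
      ∀ (x : Vec n) (μ : Measure (Vec n)), memP2 μ →
        ∫ z, ‖z‖ ^ (6 : ℕ) ∂(FS.ν x μ) ≤ Cc := by
  have := FS.probP
  have hβ : FS.γ / 2 ∈ Set.Ioo 0 ((3 : ℕ) * FS.γ) := by
    constructor <;> push_cast <;> linarith [FS.hγ]
  obtain ⟨C, hC, hmoment⟩ := sixth_moment_frozen_general FS.CG m d
    (Set.Ioo_subset_Ico_self FS.hς) hβ
  refine ⟨FS.γ / 2, ⟨half_pos FS.hγ, half_lt_self FS.hγ⟩, C, hC, fun x μ y t hμ ht => ?_,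
    fun x μ hμ => ?_⟩
  · simpa [FS.initY] using ((hmoment (FS.dissipativeCoeffs x hμ)).1
      (FS.isMartingaleSolution x hμ y) (by simp [FS.initY]) ht).2
  · obtain ⟨_, hν⟩ := FS.invν x μ hμ
    exact ((hmoment (FS.dissipativeCoeffs x hμ)).2 hν).2

end DiffApprox
end
end
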